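/- arXiv:1202.6083 — 3 statements merged into one kernel-verified Lean document; each statement's English description precedes it below -/
import Mathlib

section
/- There is a constant C > 0 depending only on L such that for every θ ∈ H¹(Γ) and every partition of Γ, Σ_{i=1}^N l_i |θ(x_i)|² + Σ_{i=1}^N |θ(x_{i+1}) − θ(x_i)|² / l_i ≤ C ‖θ‖²_{H¹(Γ)}. (The left-hand side equals (Aθ_k, θ_k)_Γ where θ_k ∈ M is the piecewise constant nodal interpolant with value θ(x_i) on τ_i.) -/
open MeasureTheory

/-!
Everything happens on a single element `[a, b]`. By Cauchy–Schwarz the oscillation of `θ` on it is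
at most `√(b - a) ‖θ'‖_{L²(a, b)}`. This bounds the difference quotient directly, and integrating
`‖θ a‖² ≤ 2 ‖θ s‖² + 2 ‖θ s - θ a‖²` over `s ∈ [a, b]` bounds the nodal value. Both bounds involve
only integrals over the element, so they add up over the partition, and the constant `2 + 2 h²`
depends on the partition only through an upper bound `h` for its mesh size.
-/

open Set

section Integral

variable {E : Type*} [NormedAddCommGroup E] [NormedSpace ℝ E]

theorem norm_integral_sq_le_measureReal_univ_mul {α : Type*} [MeasurableSpace α]
    {μ : Measure α} [IsFiniteMeasure μ] {f : α → E} (hf : MemLp f 2 μ) :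
    ‖∫ s, f s ∂μ‖ ^ 2 ≤ μ.real univ * ∫ s, ‖f s‖ ^ 2 ∂μ := by
  rcases eq_zero_or_neZero μ with rfl | _
  · simp
  have hμ : 0 < μ.real univ := measureReal_univ_pos
  have jensen : (⨍ s, ‖f s‖ ∂μ) ^ 2 ≤ ⨍ s, ‖f s‖ ^ 2 ∂μ :=
    even_two.convexOn_pow.map_average_le (continuous_pow 2).continuousOn isClosed_univ
      (by simp) (hf.integrable one_le_two).norm (hf.integrable_norm_pow two_ne_zero)
  rw [average_eq, average_eq, smul_eq_mul, smul_eq_mul, mul_pow, inv_pow,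
    inv_mul_le_iff₀ (by positivity)] at jensen
  calc ‖∫ s, f s ∂μ‖ ^ 2
    _ ≤ (∫ s, ‖f s‖ ∂μ) ^ 2 := by gcongr; exact norm_integral_le_integral_norm f
    _ ≤ μ.real univ ^ 2 * ((μ.real univ)⁻¹ * ∫ s, ‖f s‖ ^ 2 ∂μ) := jensen
    _ = μ.real univ * ∫ s, ‖f s‖ ^ 2 ∂μ := by field_simp

theorem sum_intervalIntegral_castSucc_succ {N : ℕ} {x : Fin (N + 1) → ℝ} {f : ℝ → E}
    {μ : Measure ℝ} (hf : ∀ i : Fin N, IntervalIntegrable f μ (x i.castSucc) (x i.succ)) :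
    ∑ i : Fin N, ∫ s in x i.castSucc..x i.succ, f s ∂μ = ∫ s in x 0..x (Fin.last N), f s ∂μ := by
  let y : ℕ → ℝ := fun k ↦ x (Fin.ofNat (N + 1) k)
  have hy (i : Fin (N + 1)) : y i = x i := by simp [y]
  have hy_castSucc (i : Fin N) : y i = x i.castSucc := hy i.castSucc
  have hy_succ (i : Fin N) : y (i + 1) = x i.succ := hy i.succ
  have adjacent : ∑ k ∈ Finset.range N, ∫ s in y k..y (k + 1), f s ∂μ = ∫ s in y 0..y N, f s ∂μ :=
    intervalIntegral.sum_integral_adjacent_intervals fun k hk ↦ by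
      simpa only [← hy_castSucc, ← hy_succ] using hf ⟨k, hk⟩
  rw [Finset.sum_range] at adjacent
  simpa only [hy_castSucc, hy_succ, ← hy 0, ← hy (Fin.last N), Fin.val_zero, Fin.val_last]
    using adjacent

end Integral

theorem succ_sub_castSucc_le_last_sub_zero {G : Type*} [AddCommGroup G] [PartialOrder G]
    [IsOrderedAddMonoid G] {N : ℕ} {x : Fin (N + 1) → G} (hx : Monotone x) (i : Fin N) :
    x i.succ - x i.castSucc ≤ x (Fin.last N) - x 0 :=
  sub_le_sub (hx (Fin.le_last _)) (hx (Fin.zero_le _))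

/-- `f` belongs to the Sobolev space `H¹(a, b)` with values in `E`, and `f'` is its weak derivative.
This is encoded as `f` being, on `[a, b]` including the endpoints, a primitive of the
square-integrable function `f'`, so that point values of `f` make sense; square-integrability of `f`
itself then follows. The reading is the intended one for complete `E`: otherwise Mathlib's integral
is `0` and `f` is constant. -/
structure HasH1DerivOn {E : Type*} [NormedAddCommGroup E] [NormedSpace ℝ E] (f f' : ℝ → E)
    (a b : ℝ) : Prop where
  memLp_deriv : MemLp f' 2 (volume.restrict (Ioo a b))
  eq_add_integral : ∀ s t, a ≤ s → s ≤ t → t ≤ b → f t = f s + ∫ u in s..t, f' u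

namespace HasH1DerivOn

variable {E : Type*} [NormedAddCommGroup E] [NormedSpace ℝ E] {f f' : ℝ → E} {a b c d s t : ℝ}

theorem mono (hf : HasH1DerivOn f f' a b) (hac : a ≤ c) (hdb : d ≤ b) : HasH1DerivOn f f' c d where
  memLp_deriv := hf.memLp_deriv.mono_measure (Measure.restrict_mono (Ioo_subset_Ioo hac hdb) le_rfl)
  eq_add_integral s t hs hst ht := hf.eq_add_integral s t (hac.trans hs) hst (ht.trans hdb)

theorem intervalIntegrable_norm_deriv_sq (hf : HasH1DerivOn f f' a b) (hab : a ≤ b) :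
    IntervalIntegrable (fun s ↦ ‖f' s‖ ^ 2) volume a b :=
  (intervalIntegrable_iff_integrableOn_Ioo_of_le hab).2
    (hf.memLp_deriv.integrable_norm_pow two_ne_zero)

theorem continuousOn (hf : HasH1DerivOn f f' a b) : ContinuousOn f (Icc a b) := by
  rcases lt_or_ge b a with hba | hab
  · simp [Icc_eq_empty_of_lt hba]
  have hf' : IntegrableOn f' (uIcc a b) := by
    rw [uIcc_of_le hab, integrableOn_Icc_iff_integrableOn_Ioo]
    exact hf.memLp_deriv.integrable one_le_two
  have primitive := intervalIntegral.continuousOn_primitive_interval hf'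
  rw [uIcc_of_le hab] at primitive
  exact (continuousOn_const.add primitive).congr fun s hs ↦
    hf.eq_add_integral a s le_rfl hs.1 hs.2

theorem intervalIntegrable_norm_sq (hf : HasH1DerivOn f f' a b) (hab : a ≤ b) :
    IntervalIntegrable (fun s ↦ ‖f s‖ ^ 2) volume a b :=
  (hf.continuousOn.norm.pow 2).intervalIntegrable_of_Icc hab

theorem norm_sub_endpoints_sq_le (hf : HasH1DerivOn f f' a b) (hab : a ≤ b) :
    ‖f b - f a‖ ^ 2 ≤ (b - a) * ∫ s in a..b, ‖f' s‖ ^ 2 := by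
  have cauchy_schwarz := norm_integral_sq_le_measureReal_univ_mul hf.memLp_deriv
  rw [hf.eq_add_integral a b le_rfl hab le_rfl, add_sub_cancel_left]
  simpa only [intervalIntegral.integral_of_le hab, integral_Ioc_eq_integral_Ioo,
    measureReal_restrict_apply_univ, Real.volume_real_Ioo_of_le hab] using cauchy_schwarz

theorem norm_sub_sq_le (hf : HasH1DerivOn f f' a b) (hs : s ∈ Icc a b) (ht : t ∈ Icc a b) :
    ‖f t - f s‖ ^ 2 ≤ (b - a) * ∫ u in a..b, ‖f' u‖ ^ 2 := by
  wlog hst : s ≤ t generalizing s t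
  · rw [norm_sub_rev]
    exact this ht hs (le_of_not_ge hst)
  have hab : a ≤ b := hs.1.trans hs.2
  calc ‖f t - f s‖ ^ 2
    _ ≤ (t - s) * ∫ u in s..t, ‖f' u‖ ^ 2 := (hf.mono hs.1 ht.2).norm_sub_endpoints_sq_le hst
    _ ≤ (b - a) * ∫ u in a..b, ‖f' u‖ ^ 2 := by
      refine mul_le_mul (sub_le_sub ht.2 hs.1) ?_ ?_ (sub_nonneg.2 hab)
      · exact intervalIntegral.integral_mono_interval hs.1 hst ht.2
          (.of_forall fun _ ↦ by positivity) (hf.intervalIntegrable_norm_deriv_sq hab)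
      · exact intervalIntegral.integral_nonneg hst fun _ _ ↦ by positivity

theorem length_mul_norm_sq_le (hf : HasH1DerivOn f f' a b) (hc : c ∈ Icc a b) :
    (b - a) * ‖f c‖ ^ 2 ≤
      2 * (∫ s in a..b, ‖f s‖ ^ 2) + 2 * (b - a) ^ 2 * ∫ s in a..b, ‖f' s‖ ^ 2 := by
  have hab : a ≤ b := hc.1.trans hc.2
  set D := ∫ s in a..b, ‖f' s‖ ^ 2
  have pointwise (s : ℝ) (hs : s ∈ Icc a b) : ‖f c‖ ^ 2 ≤ 2 * ‖f s‖ ^ 2 + 2 * ((b - a) * D) :=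
    calc ‖f c‖ ^ 2
      _ ≤ (‖f s‖ + ‖f c - f s‖) ^ 2 := by gcongr; exact norm_le_norm_add_norm_sub' (f c) (f s)
      _ ≤ 2 * (‖f s‖ ^ 2 + ‖f c - f s‖ ^ 2) := add_sq_le
      _ ≤ 2 * ‖f s‖ ^ 2 + 2 * ((b - a) * D) := by linarith [hf.norm_sub_sq_le hs hc]
  have hf_int := (hf.intervalIntegrable_norm_sq hab).const_mul 2
  calc (b - a) * ‖f c‖ ^ 2
    _ = ∫ _ in a..b, ‖f c‖ ^ 2 := by rw [intervalIntegral.integral_const, smul_eq_mul]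
    _ ≤ ∫ s in a..b, (2 * ‖f s‖ ^ 2 + 2 * ((b - a) * D)) :=
      intervalIntegral.integral_mono_on hab intervalIntegrable_const
        (hf_int.add intervalIntegrable_const) pointwise
    _ = 2 * (∫ s in a..b, ‖f s‖ ^ 2) + 2 * (b - a) ^ 2 * D := by
      rw [intervalIntegral.integral_add hf_int intervalIntegrable_const,
        intervalIntegral.integral_const_mul, intervalIntegral.integral_const, smul_eq_mul]
      ring

theorem length_mul_norm_sq_add_div_le {h : ℝ} (hf : HasH1DerivOn f f' a b) (hab : a < b)
    (hh : b - a ≤ h) :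
    (b - a) * ‖f a‖ ^ 2 + ‖f b - f a‖ ^ 2 / (b - a) ≤
      (2 + 2 * h ^ 2) * ∫ s in a..b, (‖f s‖ ^ 2 + ‖f' s‖ ^ 2) := by
  have hlen : 0 < b - a := sub_pos.2 hab
  rw [intervalIntegral.integral_add (hf.intervalIntegrable_norm_sq hab.le)
    (hf.intervalIntegrable_norm_deriv_sq hab.le)]
  have node := hf.length_mul_norm_sq_le (left_mem_Icc.2 hab.le)
  have quotient : ‖f b - f a‖ ^ 2 / (b - a) ≤ ∫ s in a..b, ‖f' s‖ ^ 2 :=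
    (div_le_iff₀' hlen).2 (hf.norm_sub_endpoints_sq_le hab.le)
  set E₀ := ∫ s in a..b, ‖f s‖ ^ 2
  set E₁ := ∫ s in a..b, ‖f' s‖ ^ 2
  have hE₀ : 0 ≤ E₀ := intervalIntegral.integral_nonneg hab.le fun _ _ ↦ by positivity
  have hE₁ : 0 ≤ E₁ := intervalIntegral.integral_nonneg hab.le fun _ _ ↦ by positivity
  have hsq : (b - a) ^ 2 ≤ h ^ 2 := by gcongr
  calc (b - a) * ‖f a‖ ^ 2 + ‖f b - f a‖ ^ 2 / (b - a)
    _ ≤ 2 * E₀ + (1 + 2 * (b - a) ^ 2) * E₁ := by linarith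
    _ ≤ (2 + 2 * h ^ 2) * E₀ + (2 + 2 * h ^ 2) * E₁ := by gcongr <;> linarith [sq_nonneg h]
    _ = (2 + 2 * h ^ 2) * (E₀ + E₁) := by ring

end HasH1DerivOn

theorem stmt_8_general {E : Type*} [NormedAddCommGroup E] [NormedSpace ℝ E] {N : ℕ}
    {x : Fin (N + 1) → ℝ} (hx : StrictMono x) {h : ℝ}
    (hh : ∀ i : Fin N, x i.succ - x i.castSucc ≤ h)
    {θ θ' : ℝ → E} (hθ : HasH1DerivOn θ θ' (x 0) (x (Fin.last N))) :
    (∑ i : Fin N, (x i.succ - x i.castSucc) * ‖θ (x i.castSucc)‖ ^ 2)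
        + ∑ i : Fin N, ‖θ (x i.succ) - θ (x i.castSucc)‖ ^ 2 / (x i.succ - x i.castSucc)
      ≤ (2 + 2 * h ^ 2) * ∫ s in x 0..x (Fin.last N), (‖θ s‖ ^ 2 + ‖θ' s‖ ^ 2) := by
  have hlt (i : Fin N) : x i.castSucc < x i.succ := hx Fin.castSucc_lt_succ
  have hθ_elem (i : Fin N) : HasH1DerivOn θ θ' (x i.castSucc) (x i.succ) :=
    hθ.mono (hx.monotone (Fin.zero_le _)) (hx.monotone (Fin.le_last _))
  have hint (i : Fin N) : IntervalIntegrable (fun s ↦ ‖θ s‖ ^ 2 + ‖θ' s‖ ^ 2) volume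
      (x i.castSucc) (x i.succ) :=
    ((hθ_elem i).intervalIntegrable_norm_sq (hlt i).le).add
      ((hθ_elem i).intervalIntegrable_norm_deriv_sq (hlt i).le)
  rw [← Finset.sum_add_distrib, ← sum_intervalIntegral_castSucc_succ hint, Finset.mul_sum]
  exact Finset.sum_le_sum fun i _ ↦ (hθ_elem i).length_mul_norm_sq_add_div_le (hlt i) (hh i)

/-- There is a constant `C > 0` depending only on `L` such that for every
`θ ∈ H¹(Γ)` (an `L`-periodic locally absolutely continuous `θ : ℝ → ℂ` with derivative `θ'`,
both in `L²(0,L)`) and every partition `0 = x₁ < ⋯ < x_{N+1} = L` of `Γ`,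
`∑_{i=1}^N l_i |θ(x_i)|² + ∑_{i=1}^N |θ(x_{i+1}) − θ(x_i)|² / l_i ≤ C ‖θ‖²_{H¹(Γ)}`.
(The left-hand side is `(Aθ_k, θ_k)_Γ` for the piecewise constant nodal interpolant `θ_k`.) -/
theorem stmt_8 (L : ℝ) (hL : 0 < L) :
    ∃ C > 0, ∀ (N : ℕ), 2 ≤ N →
      ∀ (x : Fin (N + 1) → ℝ), StrictMono x → x 0 = 0 → x (Fin.last N) = L →
      ∀ (θ θ' : ℝ → ℂ), (∀ s, θ (s + L) = θ s) →
      (∀ a b : ℝ, a ≤ b → θ b = θ a + ∫ t in a..b, θ' t) →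
      MemLp θ 2 (volume.restrict (Set.Ioo 0 L)) →
      MemLp θ' 2 (volume.restrict (Set.Ioo 0 L)) →
      (∑ i : Fin N, (x i.succ - x i.castSucc) * ‖θ (x i.castSucc)‖ ^ 2)
          + ∑ i : Fin N, ‖θ (x i.succ) - θ (x i.castSucc)‖ ^ 2 / (x i.succ - x i.castSucc)
        ≤ C * ∫ s in (0:ℝ)..L, (‖θ s‖ ^ 2 + ‖θ' s‖ ^ 2) := by
  refine ⟨2 + 2 * L ^ 2, by positivity, fun N _ x hx hx₀ hxL θ θ' _ hprim _ hθ' ↦ ?_⟩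
  simpa only [hx₀, hxL, sub_zero] using stmt_8_general hx
    (succ_sub_castSucc_le_last_sub_zero hx.monotone) (θ := θ) (θ' := θ')
    ⟨by rwa [hx₀, hxL], fun s t _ hst _ ↦ hprim s t hst⟩
end

section
/- There is a constant C > 0 depending only on L and the quasi-uniformity constants C₁, C₂ such that for every θ ∈ H¹(Γ), the element averages m_i = (1/l_i) ∫_{τ_i} θ(s) ds satisfy Σ_{i=1}^N l_i |m_i|² + Σ_{i=1}^N |m_{i+1} − m_i|² / l_i ≤ C ‖θ‖²_{H¹(Γ)}. Equivalently, the L²-orthogonal projection Π θ of θ onto the piecewise constant space M satisfies (A Π θ, Π θ)_Γ ≤ C ‖θ‖²_{H¹(Γ)}. -/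
open MeasureTheory

/-!
On a single element the primitive `θ` oscillates by at most `∫ ‖θ'‖`, and its average is a convex
combination of its values there. Two neighbouring averages are therefore both compared with the
value of `θ` at the common node, at the cost of `∫ ‖θ'‖` over the two elements. By Jensen's
inequality the `p`-th power of this cost is at most `l ^ (p - 1) * ∫ ‖θ'‖ ^ p` on an element of
length `l`, and summing over the elements gives the bound. Only the ratio of the lengths of
neighbouring elements enters the constant.
-/

section Jensen

variable {α E : Type*} [MeasurableSpace α] {μ : Measure α} [NormedAddCommGroup E]
  {f : α → E} {p : ℝ}

theorem rpow_average_norm_le [IsFiniteMeasure μ] (hp : 1 ≤ p) (hf : Integrable f μ)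
    (hfp : Integrable (fun x ↦ ‖f x‖ ^ p) μ) :
    (⨍ x, ‖f x‖ ∂μ) ^ p ≤ ⨍ x, ‖f x‖ ^ p ∂μ := by
  rcases eq_zero_or_neZero μ with rfl | _
  · simp [Real.zero_rpow (by positivity : p ≠ 0)]
  · exact (convexOn_rpow hp).map_average_le
      (Real.continuous_rpow_const (by positivity)).continuousOn isClosed_Ici
      (.of_forall fun x ↦ norm_nonneg (f x)) hf.norm hfp

theorem norm_average_le_average_norm [NormedSpace ℝ E] (f : α → E) :
    ‖⨍ x, f x ∂μ‖ ≤ ⨍ x, ‖f x‖ ∂μ :=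
  norm_integral_le_integral_norm f

end Jensen

section Interval

variable {E : Type*} [NormedAddCommGroup E] {f : ℝ → E} {a b p : ℝ}

theorem rpow_intervalAverage_norm_le (hp : 1 ≤ p) (hf : IntervalIntegrable f volume a b)
    (hfp : IntervalIntegrable (fun s ↦ ‖f s‖ ^ p) volume a b) :
    (⨍ s in a..b, ‖f s‖) ^ p ≤ ⨍ s in a..b, ‖f s‖ ^ p := by
  unfold Set.uIoc
  exact rpow_average_norm_le hp hf.def' hfp.def'

theorem rpow_integral_norm_le (hp : 1 ≤ p) (hab : a < b) (hf : IntervalIntegrable f volume a b)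
    (hfp : IntervalIntegrable (fun s ↦ ‖f s‖ ^ p) volume a b) :
    (∫ s in a..b, ‖f s‖) ^ p ≤ (b - a) ^ (p - 1) * ∫ s in a..b, ‖f s‖ ^ p := by
  have hl : 0 < b - a := sub_pos.2 hab
  have jensen := rpow_intervalAverage_norm_le hp hf hfp
  rw [interval_average_eq_div, interval_average_eq_div,
    Real.div_rpow (intervalIntegral.integral_nonneg hab.le fun _ _ ↦ norm_nonneg _) hl.le,
    div_le_div_iff₀ (by positivity) hl] at jensen
  rw [Real.rpow_sub_one hl.ne', div_mul_eq_mul_div, le_div_iff₀ hl]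
  linarith

theorem mul_norm_intervalAverage_rpow_le [NormedSpace ℝ E] (hp : 1 ≤ p) (hab : a < b)
    (hf : IntervalIntegrable f volume a b)
    (hfp : IntervalIntegrable (fun s ↦ ‖f s‖ ^ p) volume a b) :
    (b - a) * ‖⨍ s in a..b, f s‖ ^ p ≤ ∫ s in a..b, ‖f s‖ ^ p := by
  have hl : 0 < b - a := sub_pos.2 hab
  calc (b - a) * ‖⨍ s in a..b, f s‖ ^ p
      ≤ (b - a) * (⨍ s in a..b, ‖f s‖) ^ p := by
        gcongr
        exact norm_average_le_average_norm f
    _ ≤ (b - a) * ⨍ s in a..b, ‖f s‖ ^ p := by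
        gcongr
        exact rpow_intervalAverage_norm_le hp hf hfp
    _ = ∫ s in a..b, ‖f s‖ ^ p := by
        rw [interval_average_eq_div, mul_div_cancel₀ _ hl.ne']

end Interval

/-- `f` is an integral of the integrable function `f'` on `[a, b]`, that is, `f` is absolutely
continuous there with almost everywhere derivative `f'`. -/
structure IsPrimitiveOn {E : Type*} [NormedAddCommGroup E] [NormedSpace ℝ E]
    (f f' : ℝ → E) (a b : ℝ) : Prop where
  intervalIntegrable : IntervalIntegrable f' volume a b
  eq_add_integral : ∀ v ∈ Set.Icc a b, f v = f a + ∫ t in a..v, f' t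

namespace IsPrimitiveOn

variable {E : Type*} [NormedAddCommGroup E] [NormedSpace ℝ E] {f f' : ℝ → E} {a b c d u v p : ℝ}

theorem intervalIntegrable_subinterval (hf : IsPrimitiveOn f f' a b) (hu : u ∈ Set.Icc a b)
    (hv : v ∈ Set.Icc a b) : IntervalIntegrable f' volume u v :=
  hf.intervalIntegrable.mono_set ((Set.uIcc_subset_Icc hu hv).trans Set.Icc_subset_uIcc)

theorem sub_eq_integral (hf : IsPrimitiveOn f f' a b) (hu : u ∈ Set.Icc a b)
    (hv : v ∈ Set.Icc a b) : f v - f u = ∫ t in u..v, f' t := by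
  have ha : a ∈ Set.Icc a b := Set.left_mem_Icc.2 (hu.1.trans hu.2)
  rw [hf.eq_add_integral u hu, hf.eq_add_integral v hv, add_sub_add_left_eq_sub,
    intervalIntegral.integral_interval_sub_left (hf.intervalIntegrable_subinterval ha hv)
      (hf.intervalIntegrable_subinterval ha hu)]

theorem mono (hf : IsPrimitiveOn f f' a b) (hu : u ∈ Set.Icc a b) (hv : v ∈ Set.Icc a b) :
    IsPrimitiveOn f f' u v where
  intervalIntegrable := hf.intervalIntegrable_subinterval hu hv
  eq_add_integral w hw := by
    rw [← hf.sub_eq_integral hu ⟨hu.1.trans hw.1, hw.2.trans hv.2⟩, add_sub_cancel]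

theorem continuousOn (hf : IsPrimitiveOn f f' a b) : ContinuousOn f (Set.Icc a b) := by
  have hprim : ContinuousOn (fun v ↦ f a + ∫ t in a..v, f' t) (Set.Icc a b) :=
    continuousOn_const.add <|
      (intervalIntegral.continuousOn_primitive_interval' hf.intervalIntegrable
        Set.left_mem_uIcc).mono Set.Icc_subset_uIcc
  exact hprim.congr hf.eq_add_integral

theorem norm_sub_le_integral_norm (hf : IsPrimitiveOn f f' a b) (hu : u ∈ Set.Icc a b)
    (hv : v ∈ Set.Icc a b) : ‖f v - f u‖ ≤ ∫ t in a..b, ‖f' t‖ := by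
  have hab : a ≤ b := hu.1.trans hu.2
  rw [hf.sub_eq_integral hu hv, intervalIntegral.integral_of_le hab]
  refine intervalIntegral.norm_integral_le_integral_norm_uIoc.trans ?_
  refine setIntegral_mono_set hf.intervalIntegrable.1.norm (.of_forall fun _ ↦ norm_nonneg _) ?_
  exact (Set.Ioc_subset_Ioc (le_min hu.1 hv.1) (max_le hu.2 hv.2)).eventuallyLE

variable [CompleteSpace E]

theorem norm_intervalAverage_sub_le (hf : IsPrimitiveOn f f' a b) (hab : a < b)
    (hu : u ∈ Set.Icc a b) : ‖(⨍ s in a..b, f s) - f u‖ ≤ ∫ t in a..b, ‖f' t‖ := by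
  rw [← dist_eq_norm, ← Metric.mem_closedBall, Set.uIoc_of_le hab.le]
  refine (convex_closedBall (f u) _).set_average_mem Metric.isClosed_closedBall (by simpa using hab)
    measure_Ioc_lt_top.ne ?_ (hf.continuousOn.intervalIntegrable_of_Icc hab.le).1
  refine ae_restrict_of_forall_mem measurableSet_Ioc fun s hs ↦ ?_
  rw [Metric.mem_closedBall, dist_eq_norm]
  exact hf.norm_sub_le_integral_norm hu (Set.Ioc_subset_Icc_self hs)

theorem norm_intervalAverage_sub_intervalAverage_le (hf : IsPrimitiveOn f f' a b)
    (hg : IsPrimitiveOn f f' c d) (hab : a < b) (hcd : c < d) (hbc : f b = f c) :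
    ‖(⨍ s in c..d, f s) - ⨍ s in a..b, f s‖
      ≤ (∫ t in a..b, ‖f' t‖) + ∫ t in c..d, ‖f' t‖ := by
  have left := hf.norm_intervalAverage_sub_le hab (Set.right_mem_Icc.2 hab.le)
  have right := hg.norm_intervalAverage_sub_le hcd (Set.left_mem_Icc.2 hcd.le)
  rw [hbc, norm_sub_rev] at left
  rw [add_comm]
  exact norm_sub_le_norm_sub_add_norm_sub _ (f c) _ |>.trans (add_le_add right left)

theorem norm_intervalAverage_sub_intervalAverage_rpow_le (hp : 1 ≤ p)
    (hf : IsPrimitiveOn f f' a b) (hg : IsPrimitiveOn f f' c d) (hab : a < b) (hcd : c < d)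
    (hbc : f b = f c) (hfp : IntervalIntegrable (fun t ↦ ‖f' t‖ ^ p) volume a b)
    (hgp : IntervalIntegrable (fun t ↦ ‖f' t‖ ^ p) volume c d) :
    ‖(⨍ s in c..d, f s) - ⨍ s in a..b, f s‖ ^ p
      ≤ 2 ^ (p - 1) * ((b - a) ^ (p - 1) * (∫ t in a..b, ‖f' t‖ ^ p)
        + (d - c) ^ (p - 1) * ∫ t in c..d, ‖f' t‖ ^ p) := by
  have hA : 0 ≤ ∫ t in a..b, ‖f' t‖ :=
    intervalIntegral.integral_nonneg hab.le fun _ _ ↦ norm_nonneg _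
  have hB : 0 ≤ ∫ t in c..d, ‖f' t‖ :=
    intervalIntegral.integral_nonneg hcd.le fun _ _ ↦ norm_nonneg _
  calc ‖(⨍ s in c..d, f s) - ⨍ s in a..b, f s‖ ^ p
      ≤ ((∫ t in a..b, ‖f' t‖) + ∫ t in c..d, ‖f' t‖) ^ p := by
        gcongr
        exact hf.norm_intervalAverage_sub_intervalAverage_le hg hab hcd hbc
    _ ≤ 2 ^ (p - 1) * ((∫ t in a..b, ‖f' t‖) ^ p + (∫ t in c..d, ‖f' t‖) ^ p) := by
        exact_mod_cast NNReal.rpow_add_le_mul_rpow_add_rpow ⟨_, hA⟩ ⟨_, hB⟩ hp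
    _ ≤ _ := by
        gcongr
        · exact rpow_integral_norm_le hp hab hf.intervalIntegrable hfp
        · exact rpow_integral_norm_le hp hcd hg.intervalIntegrable hgp

end IsPrimitiveOn

section Mesh

variable {E : Type*} [NormedAddCommGroup E] {N : ℕ} {x : Fin (N + 1) → ℝ} {f f' : ℝ → E}
  {p κ : ℝ}

theorem apply_castSucc_add_one {α : Type*} [NeZero N] {g : Fin (N + 1) → α}
    (hg : g (Fin.last N) = g 0) (i : Fin N) : g (i + 1).castSucc = g i.succ := by
  obtain ⟨n, rfl⟩ := Nat.exists_eq_succ_of_ne_zero (NeZero.ne N)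
  rcases Fin.eq_castSucc_or_eq_last i with ⟨j, rfl⟩ | rfl
  · rw [Fin.coeSucc_eq_succ, Fin.succ_castSucc]
  · rw [Fin.last_add_one, Fin.succ_last, Fin.castSucc_zero, hg]

theorem mem_Icc_zero_last_of_monotone {α : Type*} [Preorder α] {y : Fin (N + 1) → α}
    (hy : Monotone y) (j : Fin (N + 1)) : y j ∈ Set.Icc (y 0) (y (Fin.last N)) :=
  ⟨hy j.zero_le, hy j.le_last⟩

theorem intervalIntegrable_cell {μ : Measure ℝ}
    (hf : IntervalIntegrable f μ (x 0) (x (Fin.last N))) (hx : Monotone x) (i : Fin N) :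
    IntervalIntegrable f μ (x i.castSucc) (x i.succ) :=
  hf.mono_set <| (Set.uIcc_subset_Icc (mem_Icc_zero_last_of_monotone hx _)
    (mem_Icc_zero_last_of_monotone hx _)).trans Set.Icc_subset_uIcc

theorem sum_integral_cells [NormedSpace ℝ E] {μ : Measure ℝ}
    (hf : ∀ i : Fin N, IntervalIntegrable f μ (x i.castSucc) (x i.succ)) :
    ∑ i : Fin N, ∫ s in x i.castSucc..x i.succ, f s ∂μ = ∫ s in x 0..x (Fin.last N), f s ∂μ := by
  have hcast (i : Fin N) : Fin.ofNat (N + 1) i = i.castSucc := by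
    ext
    simp
  have hsucc (i : Fin N) : Fin.ofNat (N + 1) (i + 1) = i.succ := by
    ext
    simp [Nat.mod_eq_of_lt (Nat.succ_lt_succ i.isLt)]
  have hlast : Fin.ofNat (N + 1) N = Fin.last N := by
    ext
    simp
  have hsum := intervalIntegral.sum_integral_adjacent_intervals (f := f) (μ := μ) (n := N)
    (a := fun k ↦ x (Fin.ofNat (N + 1) k)) fun k hk ↦ by
      simpa only [← hcast, ← hsucc] using hf ⟨k, hk⟩
  simpa only [Finset.sum_range, hcast, hsucc, hlast, Fin.ofNat_zero] using hsum

/-- The length `l_i` of the `i`-th element of the mesh with nodes `x`. -/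
def cellLength (x : Fin (N + 1) → ℝ) (i : Fin N) : ℝ :=
  x i.succ - x i.castSucc

/-- The average `m_i` of `f` over the `i`-th element of the mesh with nodes `x`, that is, the value
there of the `L²`-projection of `f` onto the piecewise constant functions. -/
noncomputable def cellAverage [NormedSpace ℝ E] (x : Fin (N + 1) → ℝ) (f : ℝ → E) (i : Fin N) : E :=
  ⨍ s in x i.castSucc..x i.succ, f s

theorem cellLength_pos (hx : StrictMono x) (i : Fin N) : 0 < cellLength x i :=
  sub_pos.2 (hx Fin.castSucc_lt_succ)

theorem nonneg_of_cellLength_le_mul (hx : StrictMono x) {i j : Fin N}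
    (hκ : cellLength x j ≤ κ * cellLength x i) : 0 ≤ κ :=
  (pos_of_mul_pos_left ((cellLength_pos hx j).trans_le hκ) (cellLength_pos hx i).le).le

theorem cellLength_le_div_mul_of_quasiUniform {C₁ C₂ h : ℝ} (hC₁ : 0 < C₁) (hC₂ : 0 ≤ C₂)
    {i j : Fin N} (hi : C₁ * h ≤ cellLength x i) (hj : cellLength x j ≤ C₂ * h) :
    cellLength x j ≤ C₂ / C₁ * cellLength x i :=
  calc cellLength x j ≤ C₂ * h := hj
    _ = C₂ / C₁ * (C₁ * h) := by field_simp
    _ ≤ C₂ / C₁ * cellLength x i := by gcongr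

variable [NormedSpace ℝ E]

theorem sum_cellLength_mul_norm_cellAverage_rpow_le (hp : 1 ≤ p) (hx : StrictMono x)
    (hf : IntervalIntegrable f volume (x 0) (x (Fin.last N)))
    (hfp : IntervalIntegrable (fun s ↦ ‖f s‖ ^ p) volume (x 0) (x (Fin.last N))) :
    ∑ i, cellLength x i * ‖cellAverage x f i‖ ^ p ≤ ∫ s in x 0..x (Fin.last N), ‖f s‖ ^ p := by
  rw [← sum_integral_cells (intervalIntegrable_cell hfp hx.monotone)]
  exact Finset.sum_le_sum fun i _ ↦ mul_norm_intervalAverage_rpow_le hp (hx Fin.castSucc_lt_succ)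
    (intervalIntegrable_cell hf hx.monotone i) (intervalIntegrable_cell hfp hx.monotone i)

variable [CompleteSpace E] [NeZero N]

theorem norm_cellAverage_add_one_sub_rpow_div_le (hp : 1 ≤ p) (hx : StrictMono x)
    (hf : IsPrimitiveOn f f' (x 0) (x (Fin.last N))) (hclosed : f (x (Fin.last N)) = f (x 0))
    (hfp : IntervalIntegrable (fun s ↦ ‖f' s‖ ^ p) volume (x 0) (x (Fin.last N)))
    {i : Fin N} (hκ : cellLength x (i + 1) ≤ κ * cellLength x i) :
    ‖cellAverage x f (i + 1) - cellAverage x f i‖ ^ p / cellLength x i ^ (p - 1)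
      ≤ 2 ^ (p - 1) * ((∫ s in x i.castSucc..x i.succ, ‖f' s‖ ^ p)
        + κ ^ (p - 1) * ∫ s in x (i + 1).castSucc..x (i + 1).succ, ‖f' s‖ ^ p) := by
  have hl := cellLength_pos hx
  have hprim (j : Fin N) : IsPrimitiveOn f f' (x j.castSucc) (x j.succ) :=
    hf.mono (mem_Icc_zero_last_of_monotone hx.monotone _)
      (mem_Icc_zero_last_of_monotone hx.monotone _)
  have hnode : f (x i.succ) = f (x (i + 1).castSucc) :=
    (apply_castSucc_add_one (g := f ∘ x) hclosed i).symm
  have hκ0 : 0 ≤ κ := nonneg_of_cellLength_le_mul hx hκ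
  have hratio : cellLength x (i + 1) ^ (p - 1) ≤ κ ^ (p - 1) * cellLength x i ^ (p - 1) := by
    rw [← Real.mul_rpow hκ0 (hl i).le]
    exact Real.rpow_le_rpow (hl (i + 1)).le hκ (sub_nonneg.2 hp)
  have hD : 0 ≤ ∫ s in x (i + 1).castSucc..x (i + 1).succ, ‖f' s‖ ^ p :=
    intervalIntegral.integral_nonneg (hx Fin.castSucc_lt_succ).le fun _ _ ↦ by positivity
  rw [div_le_iff₀ (Real.rpow_pos_of_pos (hl i) _)]
  calc ‖cellAverage x f (i + 1) - cellAverage x f i‖ ^ p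
      ≤ 2 ^ (p - 1) * (cellLength x i ^ (p - 1) * (∫ s in x i.castSucc..x i.succ, ‖f' s‖ ^ p)
        + cellLength x (i + 1) ^ (p - 1)
          * ∫ s in x (i + 1).castSucc..x (i + 1).succ, ‖f' s‖ ^ p) :=
        (hprim i).norm_intervalAverage_sub_intervalAverage_rpow_le hp (hprim (i + 1))
          (hx Fin.castSucc_lt_succ) (hx Fin.castSucc_lt_succ) hnode
          (intervalIntegrable_cell hfp hx.monotone _) (intervalIntegrable_cell hfp hx.monotone _)
    _ ≤ 2 ^ (p - 1) * (cellLength x i ^ (p - 1) * (∫ s in x i.castSucc..x i.succ, ‖f' s‖ ^ p)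
        + κ ^ (p - 1) * cellLength x i ^ (p - 1)
          * ∫ s in x (i + 1).castSucc..x (i + 1).succ, ‖f' s‖ ^ p) := by gcongr
    _ = _ := by ring

theorem sum_norm_cellAverage_add_one_sub_rpow_div_le (hp : 1 ≤ p) (hx : StrictMono x)
    (hκ : ∀ i, cellLength x (i + 1) ≤ κ * cellLength x i)
    (hf : IsPrimitiveOn f f' (x 0) (x (Fin.last N))) (hclosed : f (x (Fin.last N)) = f (x 0))
    (hfp : IntervalIntegrable (fun s ↦ ‖f' s‖ ^ p) volume (x 0) (x (Fin.last N))) :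
    ∑ i, ‖cellAverage x f (i + 1) - cellAverage x f i‖ ^ p / cellLength x i ^ (p - 1)
      ≤ 2 ^ (p - 1) * (1 + κ ^ (p - 1)) * ∫ s in x 0..x (Fin.last N), ‖f' s‖ ^ p := by
  set D : Fin N → ℝ := fun i ↦ ∫ s in x i.castSucc..x i.succ, ‖f' s‖ ^ p
  have hsum : ∑ i, D i = ∫ s in x 0..x (Fin.last N), ‖f' s‖ ^ p :=
    sum_integral_cells (intervalIntegrable_cell hfp hx.monotone)
  have hshift : ∑ i, D (i + 1) = ∑ i, D i := Equiv.sum_comp (Equiv.addRight 1) D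
  calc ∑ i, ‖cellAverage x f (i + 1) - cellAverage x f i‖ ^ p / cellLength x i ^ (p - 1)
      ≤ ∑ i, 2 ^ (p - 1) * (D i + κ ^ (p - 1) * D (i + 1)) :=
        Finset.sum_le_sum fun i _ ↦
          norm_cellAverage_add_one_sub_rpow_div_le hp hx hf hclosed hfp (hκ i)
    _ = 2 ^ (p - 1) * (1 + κ ^ (p - 1)) * ∑ i, D i := by
        rw [← Finset.mul_sum, Finset.sum_add_distrib, ← Finset.mul_sum, hshift]
        ring
    _ = _ := by rw [hsum]

theorem stmt_9_general (hp : 1 ≤ p) (hx : StrictMono x)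
    (hκ : ∀ i, cellLength x (i + 1) ≤ κ * cellLength x i)
    (hf : IsPrimitiveOn f f' (x 0) (x (Fin.last N))) (hclosed : f (x (Fin.last N)) = f (x 0))
    (hfp : IntervalIntegrable (fun s ↦ ‖f' s‖ ^ p) volume (x 0) (x (Fin.last N))) :
    ∑ i, cellLength x i * ‖cellAverage x f i‖ ^ p
        + ∑ i, ‖cellAverage x f (i + 1) - cellAverage x f i‖ ^ p / cellLength x i ^ (p - 1)
      ≤ 2 ^ (p - 1) * (1 + κ ^ (p - 1))
        * ∫ s in x 0..x (Fin.last N), (‖f s‖ ^ p + ‖f' s‖ ^ p) := by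
  have hab : x 0 ≤ x (Fin.last N) := hx.monotone (Fin.zero_le _)
  have hcont : ContinuousOn (fun s ↦ ‖f s‖ ^ p) (Set.Icc (x 0) (x (Fin.last N))) :=
    hf.continuousOn.norm.rpow_const fun _ _ ↦ .inr (by positivity)
  have hint := hcont.intervalIntegrable_of_Icc (μ := volume) hab
  have hκ0 : 0 ≤ κ := nonneg_of_cellLength_le_mul hx (hκ 0)
  have hC : 1 ≤ 2 ^ (p - 1) * (1 + κ ^ (p - 1)) :=
    one_le_mul_of_one_le_of_one_le (Real.one_le_rpow one_le_two (sub_nonneg.2 hp))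
      (le_add_of_nonneg_right (Real.rpow_nonneg hκ0 _))
  have hnonneg : 0 ≤ ∫ s in x 0..x (Fin.last N), ‖f s‖ ^ p :=
    intervalIntegral.integral_nonneg hab fun _ _ ↦ by positivity
  rw [intervalIntegral.integral_add hint hfp, mul_add]
  gcongr
  · exact (sum_cellLength_mul_norm_cellAverage_rpow_le hp hx
      (hf.continuousOn.intervalIntegrable_of_Icc hab) hint).trans
      (le_mul_of_one_le_left hnonneg hC)
  · exact sum_norm_cellAverage_add_one_sub_rpow_div_le hp hx hκ hf hclosed hfp

end Mesh

/-- There is a constant `C > 0` depending only on `L` and the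
quasi-uniformity constants `C₁, C₂` such that for every quasi-uniform partition
`0 = x₁ < ⋯ < x_{N+1} = L` of `Γ` (with `C₁ h ≤ l_i ≤ C₂ h`, `h = max_i l_i`) and every
`θ ∈ H¹(Γ)`, the element averages `m_i = (1/l_i) ∫_{τ_i} θ(s) ds` satisfy
`∑_{i=1}^N l_i |m_i|² + ∑_{i=1}^N |m_{i+1} − m_i|² / l_i ≤ C ‖θ‖²_{H¹(Γ)}`
(indices mod `N`); equivalently `(A Π θ, Π θ)_Γ ≤ C ‖θ‖²_{H¹(Γ)}` for the `L²`-projection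
`Π θ` onto the piecewise constants. -/
theorem stmt_9 (L C₁ C₂ : ℝ) (hL : 0 < L) (hC₁ : 0 < C₁) (hC₂ : 0 < C₂) :
    ∃ C > 0, ∀ (N : ℕ) [NeZero N], 2 ≤ N →
      ∀ (x : Fin (N + 1) → ℝ), StrictMono x → x 0 = 0 → x (Fin.last N) = L →
      ∀ h : ℝ, IsGreatest (Set.range fun i : Fin N => x i.succ - x i.castSucc) h →
      (∀ i : Fin N, C₁ * h ≤ x i.succ - x i.castSucc ∧ x i.succ - x i.castSucc ≤ C₂ * h) →
      ∀ (θ θ' : ℝ → ℂ), (∀ s, θ (s + L) = θ s) →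
      (∀ a b : ℝ, a ≤ b → θ b = θ a + ∫ t in a..b, θ' t) →
      MemLp θ 2 (volume.restrict (Set.Ioo 0 L)) →
      MemLp θ' 2 (volume.restrict (Set.Ioo 0 L)) →
      (let l : Fin N → ℝ := fun i => x i.succ - x i.castSucc
       let m : Fin N → ℂ := fun i =>
         ((1 / l i : ℝ) : ℂ) * ∫ s in (x i.castSucc)..(x i.succ), θ s
       (∑ i, l i * ‖m i‖ ^ 2) + ∑ i, ‖m (i + 1) - m i‖ ^ 2 / l i
         ≤ C * ∫ s in (0:ℝ)..L, (‖θ s‖ ^ 2 + ‖θ' s‖ ^ 2)) := by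
  refine ⟨2 * (1 + C₂ / C₁), by positivity, ?_⟩
  intro N _ _ x hx hx0 hxL h _ hq θ θ' hper hac _ hθ' l m
  have hratio (i : Fin N) : cellLength x (i + 1) ≤ C₂ / C₁ * cellLength x i :=
    cellLength_le_div_mul_of_quasiUniform hC₁ hC₂.le (hq i).1 (hq (i + 1)).2
  have hint : IntervalIntegrable θ' volume 0 L :=
    (intervalIntegrable_iff_integrableOn_Ioo_of_le hL.le).2 (hθ'.integrable one_le_two)
  have hint_sq : IntervalIntegrable (fun s ↦ ‖θ' s‖ ^ (2 : ℝ)) volume 0 L :=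
    (intervalIntegrable_iff_integrableOn_Ioo_of_le hL.le).2 <| by
      simpa [IntegrableOn] using hθ'.integrable_norm_rpow'
  have hprim : IsPrimitiveOn θ θ' 0 L := ⟨hint, fun v hv ↦ hac 0 v hv.1⟩
  have hclosed : θ L = θ 0 := by simpa using hper 0
  have hl : cellLength x = l := rfl
  have hm : cellAverage x θ = m := by
    ext i
    simp [cellAverage, m, l, interval_average_eq]
  have hbound := stmt_9_general one_le_two hx hratio (by rwa [hx0, hxL]) (by rwa [hx0, hxL])
    (by rwa [hx0, hxL])
  have hexp : (2 : ℝ) - 1 = 1 := by norm_num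
  simpa only [hl, hm, hx0, hxL, hexp, Real.rpow_one, Real.rpow_two] using hbound
end

section
/- There exist constants c, C > 0 depending only on L and the quasi-uniformity constants C₁, C₂ (and in particular independent of N and h) such that for every quasi-uniform partition of Γ and every piecewise constant σ ∈ M, c ‖σ‖²_{H^{−1}(Γ)} ≤ (A^{−1} σ, σ)_Γ ≤ C ‖σ‖²_{H^{−1}(Γ)}. (Here A^{−1} is well defined since the quadratic form of A is positive definite on M.) -/
open MeasureTheory
open scoped ComplexOrder

/-- The operator `A : M → M` on piecewise constants (identified with their value vectors
`c : Fin N → ℂ`, indices mod `N`): `(Aσ)|_{τ_i} = c_i − ((c_{i+1} − c_i)/l_i² − (c_i − c_{i−1})/(l_i l_{i−1}))`. -/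
noncomputable def Aop {N : ℕ} [NeZero N] (l : Fin N → ℝ) (c : Fin N → ℂ) : Fin N → ℂ :=
  fun i => c i - ((c (i + 1) - c i) / (l i : ℂ) ^ 2
    - (c i - c (i - 1)) / ((l i : ℂ) * (l (i - 1) : ℂ)))

/-- The `L²(0,L)` inner product of two piecewise constants with value vectors `c, d`:
`(σ, μ)_Γ = ∑ i, c_i \overline{d_i} l_i`. -/
noncomputable def ipGamma {N : ℕ} (l : Fin N → ℝ) (c d : Fin N → ℂ) : ℂ :=
  ∑ i, c i * (starRingEnd ℂ) (d i) * (l i : ℂ)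

/-- The set of numbers `|∫₀^L σ \overline{θ} ds|` where `θ` ranges over the unit ball of
`H¹(Γ)` (`L`-periodic, locally absolutely continuous with derivative `θ'`, `θ, θ' ∈ L²(0,L)`,
`‖θ‖²_{H¹} = ∫₀^L (|θ|² + |θ'|²) ≤ 1`), and `σ` is the piecewise constant with values `c`
on the partition `x`, so that `∫₀^L σ \overline{θ} = ∑ i, c_i ∫_{τ_i} \overline{θ}`.
The supremum of this set is the dual norm `‖σ‖_{H^{−1}(Γ)}`. -/
def Hm1Set (L : ℝ) {N : ℕ} (x : Fin (N + 1) → ℝ) (c : Fin N → ℂ) : Set ℝ :=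
  { r | ∃ θ θ' : ℝ → ℂ,
      (∀ s, θ (s + L) = θ s) ∧
      (∀ a b : ℝ, a ≤ b → θ b = θ a + ∫ t in a..b, θ' t) ∧
      MemLp θ 2 (volume.restrict (Set.Ioo 0 L)) ∧
      MemLp θ' 2 (volume.restrict (Set.Ioo 0 L)) ∧
      (∫ s in (0:ℝ)..L, (‖θ s‖ ^ 2 + ‖θ' s‖ ^ 2)) ≤ 1 ∧
      r = ‖∑ i : Fin N, c i * ∫ s in (x i.castSucc)..(x i.succ), (starRingEnd ℂ) (θ s)‖ }

/-!
Let `Q(d) = ∑ i, (l_i |d_i|² + |d_{i+1} - d_i|² / l_i)` be the discrete `H¹` energy. Summation by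
parts over the cyclic index turns `(Ad, m)_Γ` into the sesquilinear form of `Q`, so that
`(A⁻¹σ, σ)_Γ = Q(d)` for `σ = Ad`. As `σ` is piecewise constant, `∫ σ conj(θ)` is the same form
evaluated at `d` and the cell means of `θ`.

Lower bound: taking cell means is bounded from `H¹(Γ)` to `Q`, because neighbouring means both
differ little from the value of `θ` at the common node, and Cauchy–Schwarz for `Q` applies.
Upper bound: taking cell means has a bounded right inverse, by continuous piecewise quadratics;
testing `σ` with the lift of `d` gives back `Q(d)`.
-/

section SquareIntegrable

variable {E : Type*} [NormedAddCommGroup E] {f : ℝ → E} {a b : ℝ}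

lemma memLp_two_Ioc_of_continuous (hf : Continuous f) (a b : ℝ) :
    MemLp f 2 (volume.restrict (Set.Ioc a b)) :=
  (memLp_two_iff_integrable_sq_norm hf.aestronglyMeasurable).2 (hf.norm.pow 2).integrableOn_Ioc

lemma intervalIntegrable_of_memLp_two (hab : a ≤ b)
    (hf : MemLp f 2 (volume.restrict (Set.Ioc a b))) :
    IntervalIntegrable f volume a b :=
  (intervalIntegrable_iff_integrableOn_Ioc_of_le hab).2 (hf.integrable one_le_two)

lemma intervalIntegrable_sq_norm_of_memLp_two (hab : a ≤ b)
    (hf : MemLp f 2 (volume.restrict (Set.Ioc a b))) :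
    IntervalIntegrable (fun s => ‖f s‖ ^ 2) volume a b :=
  (intervalIntegrable_iff_integrableOn_Ioc_of_le hab).2 hf.norm.integrable_sq

lemma sq_intervalAverage_norm_le (hab : a < b) (hf : MemLp f 2 (volume.restrict (Set.Ioc a b))) :
    (⨍ s in a..b, ‖f s‖) ^ 2 ≤ ⨍ s in a..b, ‖f s‖ ^ 2 := by
  rw [Set.uIoc_of_le hab.le]
  exact even_two.convexOn_pow.map_set_average_le (continuousOn_pow 2) isClosed_univ
    (by simp [hab]) (by simp) (by simp) (hf.integrable one_le_two).norm hf.norm.integrable_sq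

lemma sq_integral_norm_le (hab : a < b) (hf : MemLp f 2 (volume.restrict (Set.Ioc a b))) :
    (∫ s in a..b, ‖f s‖) ^ 2 ≤ (b - a) * ∫ s in a..b, ‖f s‖ ^ 2 := by
  have hl : 0 < b - a := sub_pos.2 hab
  have := sq_intervalAverage_norm_le hab hf
  rw [interval_average_eq_div, interval_average_eq_div, div_pow, div_le_div_iff₀ (by positivity) hl]
    at this
  nlinarith

end SquareIntegrable

section IntervalIntegral

variable {E : Type*} [NormedAddCommGroup E] [NormedSpace ℝ E] {f f' : ℝ → E} {a b : ℝ}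

lemma integral_comp_sub_self_div (f : ℝ → E) {l : ℝ} (hl : l ≠ 0) (a b : ℝ) :
    ∫ s in a..b, f ((s - a) / l) = l • ∫ u in 0..(b - a) / l, f u := by
  simp only [sub_div]
  rw [intervalIntegral.integral_comp_div_sub f hl, sub_self]

lemma sum_integral_fin_adjacent {N : ℕ} (x : Fin (N + 1) → ℝ)
    (hf : ∀ i : Fin N, IntervalIntegrable f volume (x i.castSucc) (x i.succ)) :
    ∑ i : Fin N, ∫ s in (x i.castSucc)..(x i.succ), f s =
      ∫ s in (x 0)..(x (Fin.last N)), f s := by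
  let y : ℕ → ℝ := fun k => x (Fin.ofNat (N + 1) k)
  have hcast (i : Fin N) : x i.castSucc = y i := congrArg x (by ext; simp)
  have hsucc (i : Fin N) : x i.succ = y (i + 1) :=
    congrArg x (by ext; simp [Nat.mod_eq_of_lt])
  have hlast : x (Fin.last N) = y N := congrArg x (by ext; simp)
  have hzero : x 0 = y 0 := congrArg x (by ext; simp)
  simp only [hcast, hsucc, hlast, hzero] at hf ⊢
  rw [← intervalIntegral.sum_integral_adjacent_intervals fun k hk => hf ⟨k, hk⟩,
    Finset.sum_range]

lemma mul_sq_norm_intervalAverage_le (hab : a < b)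
    (hf : MemLp f 2 (volume.restrict (Set.Ioc a b))) :
    (b - a) * ‖⨍ s in a..b, f s‖ ^ 2 ≤ ∫ s in a..b, ‖f s‖ ^ 2 := by
  have hl : 0 < b - a := sub_pos.2 hab
  have : ‖∫ s in a..b, f s‖ ^ 2 ≤ (b - a) * ∫ s in a..b, ‖f s‖ ^ 2 :=
    (pow_le_pow_left₀ (norm_nonneg _)
      (intervalIntegral.norm_integral_le_integral_norm hab.le) 2).trans (sq_integral_norm_le hab hf)
  rw [interval_average_eq, norm_smul, norm_inv, Real.norm_of_nonneg hl.le, mul_pow, inv_pow]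
  calc _ = ‖∫ s in a..b, f s‖ ^ 2 / (b - a) := by field_simp
    _ ≤ _ := (div_le_iff₀' hl).2 this

lemma norm_intervalAverage_sub_le [CompleteSpace E] {z : E} {C : ℝ} (hab : a < b)
    (hf : IntervalIntegrable f volume a b) (hC : ∀ s ∈ Set.Ioc a b, ‖f s - z‖ ≤ C) :
    ‖(⨍ s in a..b, f s) - z‖ ≤ C := by
  rw [Set.uIoc_of_le hab.le, ← mem_closedBall_iff_norm]
  exact (convex_closedBall z C).set_average_mem Metric.isClosed_closedBall (by simp [hab]) (by simp)
    (ae_restrict_of_forall_mem measurableSet_Ioc fun s hs => mem_closedBall_iff_norm.2 (hC s hs))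
    ((intervalIntegrable_iff_integrableOn_Ioc_of_le hab.le).1 hf)

/-- `f` is locally absolutely continuous with weak derivative `f'`. -/
def HasIntegralDeriv (f f' : ℝ → E) : Prop :=
  ∀ a b : ℝ, a ≤ b → f b = f a + ∫ t in a..b, f' t

namespace HasIntegralDeriv

lemma norm_sub_le (h : HasIntegralDeriv f f') (hf' : IntervalIntegrable f' volume a b) {s t : ℝ}
    (hs : s ∈ Set.Icc a b) (ht : t ∈ Set.Icc a b) : ‖f s - f t‖ ≤ ∫ r in a..b, ‖f' r‖ := by
  wlog hts : t ≤ s generalizing s t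
  · rw [norm_sub_rev]
    exact this ht hs (le_of_not_ge hts)
  rw [h t s hts, add_sub_cancel_left]
  exact (intervalIntegral.norm_integral_le_integral_norm hts).trans <|
    intervalIntegral.integral_mono_interval ht.1 hts hs.2
      (Filter.Eventually.of_forall fun _ => norm_nonneg _) hf'.norm

lemma sq_norm_intervalAverage_sub_le [CompleteSpace E] (h : HasIntegralDeriv f f') (hab : a < b)
    (hf : IntervalIntegrable f volume a b) (hf' : MemLp f' 2 (volume.restrict (Set.Ioc a b)))
    {t : ℝ} (ht : t ∈ Set.Icc a b) :
    ‖(⨍ s in a..b, f s) - f t‖ ^ 2 ≤ (b - a) * ∫ s in a..b, ‖f' s‖ ^ 2 := by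
  have hosc : ‖(⨍ s in a..b, f s) - f t‖ ≤ ∫ r in a..b, ‖f' r‖ :=
    norm_intervalAverage_sub_le hab hf fun s hs =>
      h.norm_sub_le (intervalIntegrable_of_memLp_two hab.le hf') (Set.Ioc_subset_Icc_self hs) ht
  exact (pow_le_pow_left₀ (norm_nonneg _) hosc 2).trans (sq_integral_norm_le hab hf')

end HasIntegralDeriv

end IntervalIntegral

section PeriodicH1

variable {E : Type*} [NormedAddCommGroup E] {L : ℝ} {θ θ' : ℝ → E}

/-- The squared norm `‖θ‖²_{H¹(Γ)}`, with the weak derivative `θ'` passed explicitly. -/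
noncomputable def h1NormSq (L : ℝ) (θ θ' : ℝ → E) : ℝ :=
  ∫ s in (0 : ℝ)..L, (‖θ s‖ ^ 2 + ‖θ' s‖ ^ 2)

lemma h1NormSq_const_smul {𝕜 : Type*} [NormedField 𝕜] [NormedSpace 𝕜 E] (k : 𝕜) :
    h1NormSq L (k • θ) (k • θ') = ‖k‖ ^ 2 * h1NormSq L θ θ' := by
  simp only [h1NormSq, Pi.smul_apply, norm_smul, mul_pow, ← mul_add,
    intervalIntegral.integral_const_mul]

variable [NormedSpace ℝ E]

/-- `θ` belongs to `H¹(Γ)` and `θ'` is its weak derivative, for the closed curve `Γ = ℝ/Lℤ`. -/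
structure IsPeriodicH1 (L : ℝ) (θ θ' : ℝ → E) : Prop where
  periodic : Function.Periodic θ L
  hasIntegralDeriv : HasIntegralDeriv θ θ'
  memLp : MemLp θ 2 (volume.restrict (Set.Ioc 0 L))
  memLp_deriv : MemLp θ' 2 (volume.restrict (Set.Ioc 0 L))

lemma IsPeriodicH1.const_smul {𝕜 : Type*} [NormedField 𝕜] [NormedSpace 𝕜 E] [SMulCommClass ℝ 𝕜 E]
    (h : IsPeriodicH1 L θ θ') (k : 𝕜) : IsPeriodicH1 L (k • θ) (k • θ') where
  periodic := h.periodic.smul k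
  hasIntegralDeriv a b hab := by
    simp only [Pi.smul_apply, intervalIntegral.integral_smul, h.hasIntegralDeriv a b hab, smul_add]
  memLp := h.memLp.const_smul k
  memLp_deriv := h.memLp_deriv.const_smul k

lemma IsPeriodicH1.primitive [CompleteSpace E] {g : ℝ → E} (hL : 0 < L)
    (hper : Function.Periodic g L)
    (hmem : MemLp g 2 (volume.restrict (Set.Ioc 0 L))) (hzero : ∫ s in (0 : ℝ)..L, g s = 0)
    (z : E) : IsPeriodicH1 L (fun s => z + ∫ t in (0 : ℝ)..s, g t) g := by
  have hint := hper.intervalIntegrable₀ hL.ne' (intervalIntegrable_of_memLp_two hL.le hmem)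
  have hderiv : HasIntegralDeriv (fun s => z + ∫ t in (0 : ℝ)..s, g t) g := fun a b _ => by
    rw [add_assoc, intervalIntegral.integral_add_adjacent_intervals (hint _ _) (hint _ _)]
  refine ⟨fun s => ?_, hderiv, memLp_two_Ioc_of_continuous ?_ 0 L, hmem⟩
  · refine (hderiv s (s + L) (by linarith)).trans ?_
    rw [hper.intervalIntegral_add_eq s 0, zero_add, hzero, add_zero]
  · exact continuous_const.add (intervalIntegral.continuous_primitive hint 0)

end PeriodicH1

section Partition

/-- `0 = x 0 < x 1 < ⋯ < x N = L`: a partition of one period of `Γ = ℝ/Lℤ`, with nodes numbered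
from `0`. -/
structure IsPeriodPartition (L : ℝ) {N : ℕ} (x : Fin (N + 1) → ℝ) : Prop where
  strictMono : StrictMono x
  zero : x 0 = 0
  last : x (Fin.last N) = L

/-- The element `τ_i` of a partition; taken half-open so that the elements tile `(0, L]`. -/
abbrev cell {N : ℕ} (x : Fin (N + 1) → ℝ) (i : Fin N) : Set ℝ := Set.Ioc (x i.castSucc) (x i.succ)

/-- The element lengths `l_i` of a partition. -/
def mesh {N : ℕ} (x : Fin (N + 1) → ℝ) (i : Fin N) : ℝ := x i.succ - x i.castSucc

/-- The means of `θ` over the elements of a partition, i.e. the values of the `L²`-orthogonal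
projection of `θ` onto the piecewise constants. -/
noncomputable def cellMean {E : Type*} [NormedAddCommGroup E] [NormedSpace ℝ E] {N : ℕ}
    (x : Fin (N + 1) → ℝ) (θ : ℝ → E) (i : Fin N) : E :=
  ⨍ s in (x i.castSucc)..(x i.succ), θ s

lemma sum_cyclic_shift {N : ℕ} [NeZero N] {M : Type*} [AddCommMonoid M] (f : Fin N → M) :
    ∑ i, f (i + 1) = ∑ i, f i :=
  Equiv.sum_comp (Equiv.addRight (1 : Fin N)) f

lemma eq_apply_zero_of_cyclic {N : ℕ} [NeZero N] {α : Type*} {f : Fin N → α}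
    (hf : ∀ i, f (i + 1) = f i) (i : Fin N) : f i = f 0 := by
  obtain ⟨n, rfl⟩ := Nat.exists_eq_succ_of_ne_zero (NeZero.ne N)
  induction i using Fin.induction with
  | zero => rfl
  | succ i ih => rw [← Fin.coeSucc_eq_succ, hf, ih]

lemma cell_pairwise_disjoint {N : ℕ} {x : Fin (N + 1) → ℝ} (hx : Monotone x) :
    Pairwise (Function.onFun Disjoint (cell x)) := fun i j hij => by
  simpa [Function.onFun] using
    hx.pairwise_disjoint_on_Ioc_succ (Fin.castSucc_injective N |>.ne hij)

namespace IsPeriodPartition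

variable {E : Type*} [NormedAddCommGroup E] [NormedSpace ℝ E]
  {L : ℝ} {N : ℕ} {x : Fin (N + 1) → ℝ} {θ θ' : ℝ → E}

lemma castSucc_lt_succ (hx : IsPeriodPartition L x) (i : Fin N) : x i.castSucc < x i.succ :=
  hx.strictMono Fin.castSucc_lt_succ

lemma mesh_pos (hx : IsPeriodPartition L x) (i : Fin N) : 0 < mesh x i :=
  sub_pos.2 (hx.castSucc_lt_succ i)

lemma mem_Icc (hx : IsPeriodPartition L x) (j : Fin (N + 1)) : x j ∈ Set.Icc 0 L := by
  rw [← hx.zero, ← hx.last]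
  exact ⟨hx.strictMono.monotone j.zero_le, hx.strictMono.monotone j.le_last⟩

lemma pos [NeZero N] (hx : IsPeriodPartition L x) : 0 < L :=
  (hx.mem_Icc (0 : Fin N).castSucc).1.trans_lt
    ((hx.castSucc_lt_succ 0).trans_le (hx.mem_Icc (0 : Fin N).succ).2)

lemma mesh_le (hx : IsPeriodPartition L x) (i : Fin N) : mesh x i ≤ L := by
  have h₀ := (hx.mem_Icc i.castSucc).1
  have h₁ := (hx.mem_Icc i.succ).2
  rw [mesh]
  linarith

lemma nonneg_of_mesh_succ_le [NeZero N] (hx : IsPeriodPartition L x) {R : ℝ}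
    (hR : ∀ i, mesh x (i + 1) ≤ R * mesh x i) : 0 ≤ R :=
  (pos_of_mul_pos_left ((hx.mesh_pos _).trans_le (hR 0)) (hx.mesh_pos 0).le).le

lemma cell_subset (hx : IsPeriodPartition L x) (i : Fin N) : cell x i ⊆ Set.Ioc 0 L :=
  Set.Ioc_subset_Ioc (hx.mem_Icc _).1 (hx.mem_Icc _).2

lemma apply_succ_eq {α : Type*} [NeZero N] (hx : IsPeriodPartition L x) {f : ℝ → α}
    (hf : Function.Periodic f L) (i : Fin N) : f (x i.succ) = f (x (i + 1).castSucc) := by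
  obtain ⟨n, rfl⟩ := Nat.exists_eq_succ_of_ne_zero (NeZero.ne N)
  induction i using Fin.lastCases with
  | last => simp [hx.last, hx.zero, hf.eq]
  | cast i => rw [Fin.coeSucc_eq_succ, Fin.succ_castSucc]

lemma memLp_cell {E : Type*} [NormedAddCommGroup E] {f : ℝ → E} (hx : IsPeriodPartition L x)
    (hf : MemLp f 2 (volume.restrict (Set.Ioc 0 L))) (i : Fin N) :
    MemLp f 2 (volume.restrict (cell x i)) :=
  hf.mono_measure (Measure.restrict_mono (hx.cell_subset i) le_rfl)

lemma h1NormSq_eq_sum (hx : IsPeriodPartition L x) (hθ : IsPeriodicH1 L θ θ') :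
    h1NormSq L θ θ' = ∑ i : Fin N, ((∫ s in (x i.castSucc)..(x i.succ), ‖θ s‖ ^ 2) +
      ∫ s in (x i.castSucc)..(x i.succ), ‖θ' s‖ ^ 2) := by
  have hsq (i : Fin N) := intervalIntegrable_sq_norm_of_memLp_two (hx.castSucc_lt_succ i).le
    (hx.memLp_cell hθ.memLp i)
  have hsq' (i : Fin N) := intervalIntegrable_sq_norm_of_memLp_two (hx.castSucc_lt_succ i).le
    (hx.memLp_cell hθ.memLp_deriv i)
  simp only [← intervalIntegral.integral_add (hsq _) (hsq' _)]
  rw [sum_integral_fin_adjacent x fun i => (hsq i).add (hsq' i), hx.zero, hx.last, h1NormSq]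

end IsPeriodPartition

end Partition

section DiscreteEnergy

variable {N : ℕ}

lemma conj_ipGamma (l : Fin N → ℝ) (c d : Fin N → ℂ) :
    (starRingEnd ℂ) (ipGamma l c d) = ipGamma l d c := by
  simp only [ipGamma, map_sum, map_mul, Complex.conj_conj, Complex.conj_ofReal,
    mul_comm ((starRingEnd ℂ) _)]

variable [NeZero N]

/-- The discrete `H¹` energy `∑ i, (l_i |d_i|² + |d_{i+1} - d_i|² / l_i)` of a piecewise constant
with values `d`. -/
noncomputable def discreteEnergy {E : Type*} [NormedAddCommGroup E] (l : Fin N → ℝ)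
    (d : Fin N → E) : ℝ :=
  ∑ i, (l i * ‖d i‖ ^ 2 + ‖d (i + 1) - d i‖ ^ 2 / l i)

/-- The vector of weighted values and weighted jumps of a piecewise constant, whose Euclidean norm
is the square root of the discrete energy. -/
noncomputable def energyVec (l : Fin N → ℝ) (d : Fin N → ℂ) : EuclideanSpace ℂ (Fin N ⊕ Fin N) :=
  WithLp.toLp 2 (Sum.elim (fun i => (√(l i) : ℂ) * d i) fun i => (d (i + 1) - d i) / (√(l i) : ℂ))

variable {l : Fin N → ℝ}

lemma discreteEnergy_nonneg {E : Type*} [NormedAddCommGroup E] (hl : ∀ i, 0 ≤ l i) (d : Fin N → E) :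
    0 ≤ discreteEnergy l d :=
  Finset.sum_nonneg fun i _ => by
    have := hl i
    positivity

lemma sq_norm_energyVec (hl : ∀ i, 0 ≤ l i) (d : Fin N → ℂ) :
    ‖energyVec l d‖ ^ 2 = discreteEnergy l d := by
  simp [EuclideanSpace.norm_sq_eq, energyVec, discreteEnergy, mul_pow, div_pow, Real.sq_sqrt (hl _),
    Finset.sum_add_distrib]

lemma ipGamma_Aop_left (hl : ∀ i, 0 < l i) (d m : Fin N → ℂ) :
    ipGamma l (Aop l d) m = inner ℂ (energyVec l m) (energyVec l d) := by
  have hcell (i : Fin N) : Aop l d i * (starRingEnd ℂ) (m i) * l i =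
      l i * d i * (starRingEnd ℂ) (m i) - (d (i + 1) - d i) / l i * (starRingEnd ℂ) (m i) +
        (d i - d (i - 1)) / l (i - 1) * (starRingEnd ℂ) (m i) := by
    have h₁ : (l i : ℂ) ≠ 0 := by exact_mod_cast (hl i).ne'
    have h₂ : (l (i - 1) : ℂ) ≠ 0 := by exact_mod_cast (hl (i - 1)).ne'
    rw [Aop]
    field_simp
    ring
  have hparts := sum_cyclic_shift fun i =>
    (d i - d (i - 1)) / (l (i - 1) : ℂ) * (starRingEnd ℂ) (m i)
  have hsqrt (i : Fin N) : (√(l i) : ℂ) * √(l i) = l i := by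
    exact_mod_cast Real.mul_self_sqrt (hl i).le
  simp only [add_sub_cancel_right] at hparts
  simp only [ipGamma, hcell, Finset.sum_add_distrib, ← hparts]
  simp only [energyVec, PiLp.inner_apply, Fintype.sum_sum_type, Sum.elim_inl, Sum.elim_inr,
    RCLike.inner_apply, map_mul, map_div₀, Complex.conj_ofReal, ← Finset.sum_add_distrib]
  refine Finset.sum_congr rfl fun i _ => ?_
  rw [← hsqrt, map_sub]
  ring

lemma ipGamma_Aop_right_self (hl : ∀ i, 0 < l i) (d : Fin N → ℂ) :
    ipGamma l d (Aop l d) = discreteEnergy l d := by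
  rw [← conj_ipGamma, ipGamma_Aop_left hl, inner_self_eq_norm_sq_to_K,
    ← sq_norm_energyVec fun i => (hl i).le]
  simp

lemma sq_norm_ipGamma_Aop_left_le (hl : ∀ i, 0 < l i) (d m : Fin N → ℂ) :
    ‖ipGamma l (Aop l d) m‖ ^ 2 ≤ discreteEnergy l m * discreteEnergy l d := by
  rw [ipGamma_Aop_left hl, ← sq_norm_energyVec fun i => (hl i).le,
    ← sq_norm_energyVec fun i => (hl i).le, ← mul_pow]
  exact pow_le_pow_left₀ (norm_nonneg _) (norm_inner_le_norm _ _) 2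

end DiscreteEnergy

section CellMeanEnergy

variable {E : Type*} [NormedAddCommGroup E] [NormedSpace ℝ E] [CompleteSpace E]
  {L R : ℝ} {N : ℕ} {x : Fin (N + 1) → ℝ} {θ θ' : ℝ → E}

namespace IsPeriodPartition

lemma sq_norm_cellMean_sub_le (hx : IsPeriodPartition L x) (hθ : IsPeriodicH1 L θ θ') (i : Fin N)
    {t : ℝ} (ht : t ∈ Set.Icc (x i.castSucc) (x i.succ)) :
    ‖cellMean x θ i - θ t‖ ^ 2 ≤
      mesh x i * ∫ s in (x i.castSucc)..(x i.succ), ‖θ' s‖ ^ 2 :=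
  hθ.hasIntegralDeriv.sq_norm_intervalAverage_sub_le (hx.castSucc_lt_succ i)
    (intervalIntegrable_of_memLp_two (hx.castSucc_lt_succ i).le (hx.memLp_cell hθ.memLp i))
    (hx.memLp_cell hθ.memLp_deriv i) ht

variable [NeZero N]

lemma sq_norm_cellMean_jump_le (hx : IsPeriodPartition L x) (hθ : IsPeriodicH1 L θ θ')
    (hR : ∀ i, mesh x (i + 1) ≤ R * mesh x i) (i : Fin N) :
    ‖cellMean x θ (i + 1) - cellMean x θ i‖ ^ 2 / mesh x i ≤
      2 * (R * ∫ s in (x (i + 1).castSucc)..(x (i + 1).succ), ‖θ' s‖ ^ 2) +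
        2 * ∫ s in (x i.castSucc)..(x i.succ), ‖θ' s‖ ^ 2 := by
  have hlt := hx.castSucc_lt_succ
  have hright := hx.sq_norm_cellMean_sub_le hθ (i + 1) (Set.left_mem_Icc.2 (hlt (i + 1)).le)
  have hleft := hx.sq_norm_cellMean_sub_le hθ i (Set.right_mem_Icc.2 (hlt i).le)
  rw [← hx.apply_succ_eq hθ.periodic] at hright
  have hjump := norm_sub_le (cellMean x θ (i + 1) - θ (x i.succ)) (cellMean x θ i - θ (x i.succ))
  rw [sub_sub_sub_cancel_right] at hjump
  have hmesh := mul_le_mul_of_nonneg_right (hR i) <|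
    intervalIntegral.integral_nonneg (μ := volume) (hlt (i + 1)).le fun s _ => sq_nonneg ‖θ' s‖
  rw [div_le_iff₀ (hx.mesh_pos i)]
  calc _ ≤ _ := pow_le_pow_left₀ (norm_nonneg _) hjump 2
    _ ≤ _ := add_sq_le
    _ ≤ _ := by linarith

lemma discreteEnergy_cellMean_le (hx : IsPeriodPartition L x) (hθ : IsPeriodicH1 L θ θ')
    (hR : ∀ i, mesh x (i + 1) ≤ R * mesh x i) :
    discreteEnergy (mesh x) (cellMean x θ) ≤ 2 * (R + 1) * h1NormSq L θ θ' := by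
  have hR₀ := hx.nonneg_of_mesh_succ_le hR
  set F : Fin N → ℝ := fun i => ∫ s in (x i.castSucc)..(x i.succ), ‖θ s‖ ^ 2
  set D : Fin N → ℝ := fun i => ∫ s in (x i.castSucc)..(x i.succ), ‖θ' s‖ ^ 2
  have hF : 0 ≤ ∑ i, F i := Finset.sum_nonneg fun i _ =>
    intervalIntegral.integral_nonneg (hx.castSucc_lt_succ i).le fun s _ => sq_nonneg _
  have hmean (i : Fin N) : mesh x i * ‖cellMean x θ i‖ ^ 2 ≤ F i :=
    mul_sq_norm_intervalAverage_le (hx.castSucc_lt_succ i) (hx.memLp_cell hθ.memLp i)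
  calc discreteEnergy (mesh x) (cellMean x θ)
      ≤ ∑ i, (F i + (2 * (R * D (i + 1)) + 2 * D i)) :=
        Finset.sum_le_sum fun i _ => add_le_add (hmean i) (hx.sq_norm_cellMean_jump_le hθ hR i)
    _ = ∑ i, F i + 2 * (R + 1) * ∑ i, D i := by
        simp only [Finset.sum_add_distrib, ← Finset.mul_sum, sum_cyclic_shift D]
        ring
    _ ≤ 2 * (R + 1) * (∑ i, F i + ∑ i, D i) := by nlinarith
    _ = 2 * (R + 1) * h1NormSq L θ θ' := by
        rw [hx.h1NormSq_eq_sum hθ, Finset.sum_add_distrib]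

end IsPeriodPartition

end CellMeanEnergy

section Bubble

/-- The shape function of the lift on the reference element `(0, 1)`: the quadratic polynomial with
value `0` at `0`, value `1` at `1`, and mean `0`. -/
def bubble (u : ℝ) : ℝ := 3 * u ^ 2 - 2 * u

/-- The derivative of `bubble`. -/
def bubbleDeriv (u : ℝ) : ℝ := 6 * u - 2

@[fun_prop]
lemma continuous_bubble : Continuous bubble := by
  unfold bubble
  fun_prop

@[fun_prop]
lemma continuous_bubbleDeriv : Continuous bubbleDeriv := by
  unfold bubbleDeriv
  fun_prop

lemma integral_bubbleDeriv (w : ℝ) : ∫ u in (0 : ℝ)..w, bubbleDeriv u = bubble w := by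
  have h (u : ℝ) : HasDerivAt bubble (bubbleDeriv u) u :=
    (((hasDerivAt_pow 2 u).const_mul 3).sub ((hasDerivAt_id u).const_mul 2)).congr_deriv <| by
      simp only [bubbleDeriv]
      ring
  rw [intervalIntegral.integral_eq_sub_of_hasDerivAt (fun u _ => h u)
    (continuous_bubbleDeriv.intervalIntegrable _ _)]
  simp [bubble]

lemma integral_bubble : ∫ u in (0 : ℝ)..1, bubble u = 0 := by
  simp only [bubble]
  rw [intervalIntegral.integral_sub, intervalIntegral.integral_const_mul,
    intervalIntegral.integral_const_mul, integral_pow, integral_id]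
  · norm_num
  all_goals exact Continuous.intervalIntegrable (by fun_prop) _ _

lemma integral_bubble_sq : ∫ u in (0 : ℝ)..1, bubble u ^ 2 = 2 / 15 := by
  have h (u : ℝ) : bubble u ^ 2 = 9 * u ^ 4 - 12 * u ^ 3 + 4 * u ^ 2 := by
    rw [bubble]
    ring
  simp only [h]
  rw [intervalIntegral.integral_add, intervalIntegral.integral_sub,
    intervalIntegral.integral_const_mul, intervalIntegral.integral_const_mul,
    intervalIntegral.integral_const_mul, integral_pow, integral_pow, integral_pow]
  · norm_num
  all_goals exact Continuous.intervalIntegrable (by fun_prop) _ _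

lemma integral_bubbleDeriv_sq : ∫ u in (0 : ℝ)..1, bubbleDeriv u ^ 2 = 4 := by
  have h (u : ℝ) : bubbleDeriv u ^ 2 = 36 * u ^ 2 - 24 * u + 4 := by
    rw [bubbleDeriv]
    ring
  simp only [h]
  rw [intervalIntegral.integral_add, intervalIntegral.integral_sub,
    intervalIntegral.integral_const_mul, intervalIntegral.integral_const_mul,
    intervalIntegral.integral_const, integral_pow, integral_id]
  · norm_num
  all_goals exact Continuous.intervalIntegrable (by fun_prop) _ _

variable {E : Type*} [NormedAddCommGroup E] {a b : ℝ}

lemma integral_rescaled_bubbleDeriv [NormedSpace ℝ E] [CompleteSpace E] {l : ℝ} (hl : l ≠ 0)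
    (a v : ℝ) (δ : E) :
    ∫ s in a..v, (bubbleDeriv ((s - a) / l) / l) • δ = bubble ((v - a) / l) • δ := by
  rw [intervalIntegral.integral_smul_const,
    integral_comp_sub_self_div (fun u => bubbleDeriv u / l) hl, intervalIntegral.integral_div,
    integral_bubbleDeriv, smul_eq_mul, mul_div_cancel₀ _ hl]

lemma average_add_rescaled_bubble [NormedSpace ℝ E] [CompleteSpace E] (hab : a < b) (z δ : E) :
    ⨍ s in a..b, (z + bubble ((s - a) / (b - a)) • δ) = z := by
  have hl : b - a ≠ 0 := (sub_pos.2 hab).ne'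
  have hint : IntervalIntegrable (fun u => bubble u • δ) volume 0 1 :=
    Continuous.intervalIntegrable (by fun_prop) _ _
  rw [interval_average_eq, integral_comp_sub_self_div (fun u => z + bubble u • δ) hl, div_self hl,
    inv_smul_smul₀ hl, intervalIntegral.integral_add (by simp) hint,
    intervalIntegral.integral_smul_const, integral_bubble]
  simp

lemma integral_sq_norm_add_bubble [InnerProductSpace ℝ E] (z δ : E) :
    ∫ u in (0 : ℝ)..1, ‖z + bubble u • δ‖ ^ 2 = ‖z‖ ^ 2 + 2 / 15 * ‖δ‖ ^ 2 := by
  have hexpand (u : ℝ) : ‖z + bubble u • δ‖ ^ 2 =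
      ‖z‖ ^ 2 + bubble u * (2 * inner ℝ z δ) + bubble u ^ 2 * ‖δ‖ ^ 2 := by
    rw [norm_add_sq_real, inner_smul_right, norm_smul, mul_pow, Real.norm_eq_abs, sq_abs]
    ring
  simp only [hexpand]
  rw [intervalIntegral.integral_add (Continuous.intervalIntegrable (by fun_prop) _ _)
      (Continuous.intervalIntegrable (by fun_prop) _ _),
    intervalIntegral.integral_add (by simp) (Continuous.intervalIntegrable (by fun_prop) _ _),
    intervalIntegral.integral_mul_const, intervalIntegral.integral_mul_const, integral_bubble,
    integral_bubble_sq]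
  simp

lemma integral_sq_norm_add_rescaled_bubble [InnerProductSpace ℝ E] (hab : a < b) (z δ : E) :
    ∫ s in a..b, ‖z + bubble ((s - a) / (b - a)) • δ‖ ^ 2 =
      (b - a) * (‖z‖ ^ 2 + 2 / 15 * ‖δ‖ ^ 2) := by
  have hl : b - a ≠ 0 := (sub_pos.2 hab).ne'
  rw [integral_comp_sub_self_div (fun u => ‖z + bubble u • δ‖ ^ 2) hl, div_self hl,
    integral_sq_norm_add_bubble, smul_eq_mul]

lemma integral_sq_norm_rescaled_bubbleDeriv [NormedSpace ℝ E] (hab : a < b) (δ : E) :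
    ∫ s in a..b, ‖(bubbleDeriv ((s - a) / (b - a)) / (b - a)) • δ‖ ^ 2 =
      4 * (‖δ‖ ^ 2 / (b - a)) := by
  have hl : b - a ≠ 0 := (sub_pos.2 hab).ne'
  simp only [norm_smul, mul_pow, Real.norm_eq_abs, sq_abs, div_pow]
  rw [intervalIntegral.integral_mul_const, intervalIntegral.integral_div,
    integral_comp_sub_self_div (fun u => bubbleDeriv u ^ 2) hl, div_self hl,
    integral_bubbleDeriv_sq, smul_eq_mul]
  field_simp

end Bubble

section PeriodicGlue

variable {E : Type*} [NormedAddCommGroup E] {L : ℝ} {N : ℕ} {x : Fin (N + 1) → ℝ}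

/-- The `L`-periodic function that agrees with `G i` on the element `cell x i`. -/
noncomputable def periodicGlue (hL : 0 < L) (x : Fin (N + 1) → ℝ) (G : Fin N → ℝ → E) (s : ℝ) : E :=
  ∑ i, (cell x i).indicator (G i) (toIocMod hL 0 s)

lemma periodic_periodicGlue (hL : 0 < L) (G : Fin N → ℝ → E) :
    Function.Periodic (periodicGlue hL x G) L := fun s => by
  simp only [periodicGlue, toIocMod_add_right]

lemma periodicGlue_eq_sum_indicator (hL : 0 < L) (G : Fin N → ℝ → E) {s : ℝ}
    (hs : s ∈ Set.Ioc 0 L) : periodicGlue hL x G s = ∑ i, (cell x i).indicator (G i) s := by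
  rw [periodicGlue, (toIocMod_eq_self hL).2 (by rwa [zero_add])]

lemma memLp_periodicGlue (hL : 0 < L) {G : Fin N → ℝ → E} (hG : ∀ i, Continuous (G i)) :
    MemLp (periodicGlue hL x G) 2 (volume.restrict (Set.Ioc 0 L)) := by
  have hmem := memLp_finsetSum Finset.univ fun i _ =>
    (memLp_two_Ioc_of_continuous (hG i) 0 L).indicator
      (measurableSet_Ioc (a := x (Fin.castSucc i)) (b := x i.succ))
  exact hmem.ae_eq (ae_restrict_of_forall_mem measurableSet_Ioc fun s hs =>
    (periodicGlue_eq_sum_indicator hL G hs).symm)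

lemma IsPeriodPartition.periodicGlue_eq (hx : IsPeriodPartition L x) (hL : 0 < L)
    (G : Fin N → ℝ → E) {i : Fin N} {s : ℝ} (hs : s ∈ cell x i) :
    periodicGlue hL x G s = G i s := by
  rw [periodicGlue_eq_sum_indicator hL G (hx.cell_subset i hs), Finset.sum_eq_single i,
    Set.indicator_of_mem hs]
  · exact fun j _ hj => Set.indicator_of_notMem
      (Set.disjoint_right.1 (cell_pairwise_disjoint hx.strictMono.monotone hj) hs) _
  · simp

end PeriodicGlue

section H1Lift

variable {E : Type*} [NormedAddCommGroup E] {L : ℝ} {N : ℕ} [NeZero N] {x : Fin (N + 1) → ℝ}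

/-- The weak derivative of `h1Lift`. -/
noncomputable def h1LiftDeriv [NormedSpace ℝ E] (hL : 0 < L) (x : Fin (N + 1) → ℝ) (d : Fin N → E) :
    ℝ → E :=
  periodicGlue hL x fun i s =>
    (bubbleDeriv ((s - x i.castSucc) / mesh x i) / mesh x i) • (d (i + 1) - d i)

/-- The piecewise quadratic, continuous, periodic function with value `d i` at the left endpoint of
the element `i` and with mean `d i` over it: a right inverse of `cellMean`, defined as a primitive
so that it is absolutely continuous by construction. -/
noncomputable def h1Lift [NormedSpace ℝ E] (hL : 0 < L) (x : Fin (N + 1) → ℝ) (d : Fin N → E)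
    (s : ℝ) : E :=
  d 0 + ∫ t in (0 : ℝ)..s, h1LiftDeriv hL x d t

namespace IsPeriodPartition

section NormedSpace

variable [NormedSpace ℝ E]

lemma h1LiftDeriv_eq (hx : IsPeriodPartition L x) (hL : 0 < L) (d : Fin N → E) {i : Fin N} {s : ℝ}
    (hs : s ∈ cell x i) : h1LiftDeriv hL x d s =
      (bubbleDeriv ((s - x i.castSucc) / mesh x i) / mesh x i) • (d (i + 1) - d i) :=
  hx.periodicGlue_eq hL _ hs

variable [CompleteSpace E]

lemma integral_h1LiftDeriv (hx : IsPeriodPartition L x) (hL : 0 < L) (d : Fin N → E) {i : Fin N}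
    {v : ℝ} (hv : v ∈ Set.Icc (x i.castSucc) (x i.succ)) :
    ∫ s in (x i.castSucc)..v, h1LiftDeriv hL x d s =
      bubble ((v - x i.castSucc) / mesh x i) • (d (i + 1) - d i) := by
  rw [← integral_rescaled_bubbleDeriv (hx.mesh_pos i).ne']
  refine intervalIntegral.integral_congr_ae (Filter.Eventually.of_forall fun s hs => ?_)
  rw [Set.uIoc_of_le hv.1] at hs
  exact hx.h1LiftDeriv_eq hL d ⟨hs.1, hs.2.trans hv.2⟩

lemma integral_h1LiftDeriv_cell (hx : IsPeriodPartition L x) (hL : 0 < L) (d : Fin N → E)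
    (i : Fin N) :
    ∫ s in (x i.castSucc)..(x i.succ), h1LiftDeriv hL x d s = d (i + 1) - d i := by
  rw [hx.integral_h1LiftDeriv hL d (Set.right_mem_Icc.2 (hx.castSucc_lt_succ i).le), ← mesh,
    div_self (hx.mesh_pos i).ne']
  norm_num [bubble]

lemma isPeriodicH1_h1Lift (hx : IsPeriodPartition L x) (hL : 0 < L) (d : Fin N → E) :
    IsPeriodicH1 L (h1Lift hL x d) (h1LiftDeriv hL x d) := by
  have hper : Function.Periodic (h1LiftDeriv hL x d) L := periodic_periodicGlue hL _
  have hmem : MemLp (h1LiftDeriv hL x d) 2 (volume.restrict (Set.Ioc 0 L)) :=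
    memLp_periodicGlue hL fun i => by fun_prop
  refine IsPeriodicH1.primitive hL hper hmem ?_ (d 0)
  have hint := hper.intervalIntegrable₀ hL.ne' (intervalIntegrable_of_memLp_two hL.le hmem)
  have hsum := sum_integral_fin_adjacent x fun i => hint (x i.castSucc) (x i.succ)
  rw [hx.zero, hx.last] at hsum
  simp only [← hsum, hx.integral_h1LiftDeriv_cell, Finset.sum_sub_distrib, sum_cyclic_shift d,
    sub_self]

lemma h1Lift_node (hx : IsPeriodPartition L x) (hL : 0 < L) (d : Fin N → E) (i : Fin N) :
    h1Lift hL x d (x i.castSucc) = d i := by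
  have hθ := hx.isPeriodicH1_h1Lift hL d
  have hstep (j : Fin N) : h1Lift hL x d (x (j + 1).castSucc) - d (j + 1) =
      h1Lift hL x d (x j.castSucc) - d j := by
    rw [← hx.apply_succ_eq hθ.periodic, hθ.hasIntegralDeriv _ _ (hx.castSucc_lt_succ j).le,
      hx.integral_h1LiftDeriv_cell]
    abel
  have hzero : h1Lift hL x d (x (0 : Fin N).castSucc) = d 0 := by
    simp [h1Lift, hx.zero]
  rw [← sub_eq_zero,
    eq_apply_zero_of_cyclic (f := fun j => h1Lift hL x d (x j.castSucc) - d j) hstep i, hzero,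
    sub_self]

lemma h1Lift_eq (hx : IsPeriodPartition L x) (hL : 0 < L) (d : Fin N → E) {i : Fin N} {s : ℝ}
    (hs : s ∈ Set.Icc (x i.castSucc) (x i.succ)) : h1Lift hL x d s =
      d i + bubble ((s - x i.castSucc) / mesh x i) • (d (i + 1) - d i) := by
  rw [(hx.isPeriodicH1_h1Lift hL d).hasIntegralDeriv _ _ hs.1, hx.h1Lift_node,
    hx.integral_h1LiftDeriv hL d hs]

lemma cellMean_h1Lift (hx : IsPeriodPartition L x) (hL : 0 < L) (d : Fin N → E) :
    cellMean x (h1Lift hL x d) = d := by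
  ext i
  have hlt := hx.castSucc_lt_succ i
  rw [cellMean, ← average_add_rescaled_bubble hlt (d i) (d (i + 1) - d i)]
  refine setAverage_congr_fun measurableSet_uIoc (Filter.Eventually.of_forall fun s hs => ?_)
  rw [Set.uIoc_of_le hlt.le] at hs
  exact hx.h1Lift_eq hL d (Set.Ioc_subset_Icc_self hs)

end NormedSpace

variable [InnerProductSpace ℝ E] [CompleteSpace E]

lemma h1NormSq_h1Lift (hx : IsPeriodPartition L x) (hL : 0 < L) (d : Fin N → E) :
    h1NormSq L (h1Lift hL x d) (h1LiftDeriv hL x d) =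
      ∑ i, (mesh x i * (‖d i‖ ^ 2 + 2 / 15 * ‖d (i + 1) - d i‖ ^ 2) +
        4 * (‖d (i + 1) - d i‖ ^ 2 / mesh x i)) := by
  rw [hx.h1NormSq_eq_sum (hx.isPeriodicH1_h1Lift hL d)]
  refine Finset.sum_congr rfl fun i _ => ?_
  have hlt := hx.castSucc_lt_succ i
  rw [mesh, ← integral_sq_norm_add_rescaled_bubble hlt, ← integral_sq_norm_rescaled_bubbleDeriv hlt]
  congr 1 <;> refine intervalIntegral.integral_congr_ae (Filter.Eventually.of_forall fun s hs => ?_)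
  all_goals rw [Set.uIoc_of_le hlt.le] at hs
  · rw [hx.h1Lift_eq hL d (Set.Ioc_subset_Icc_self hs), mesh]
  · rw [hx.h1LiftDeriv_eq hL d hs, mesh]

lemma h1NormSq_h1Lift_le (hx : IsPeriodPartition L x) (hL : 0 < L) (d : Fin N → E) :
    h1NormSq L (h1Lift hL x d) (h1LiftDeriv hL x d) ≤
      (2 / 15 * L ^ 2 + 4) * discreteEnergy (mesh x) d := by
  rw [hx.h1NormSq_h1Lift, discreteEnergy, Finset.mul_sum]
  refine Finset.sum_le_sum fun i _ => ?_
  have hl := hx.mesh_pos i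
  have hlL : mesh x i ^ 2 ≤ L ^ 2 := pow_le_pow_left₀ hl.le (hx.mesh_le i) 2
  have hvalue : 0 ≤ mesh x i * ‖d i‖ ^ 2 := by positivity
  have hjump : 0 ≤ ‖d (i + 1) - d i‖ ^ 2 / mesh x i := by positivity
  calc _ = mesh x i * ‖d i‖ ^ 2 +
        (2 / 15 * mesh x i ^ 2 + 4) * (‖d (i + 1) - d i‖ ^ 2 / mesh x i) := by
        field_simp
        ring
    _ ≤ _ := by nlinarith [mul_le_mul_of_nonneg_right hlL hjump, sq_nonneg L]

end IsPeriodPartition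

end H1Lift

section DualNorm

variable {L R r nrm : ℝ} {N : ℕ} {x : Fin (N + 1) → ℝ} {c d : Fin N → ℂ} {θ θ' : ℝ → ℂ}

lemma cellMean_const_smul (k : ℂ) (x : Fin (N + 1) → ℝ) (θ : ℝ → ℂ) :
    cellMean x (k • θ) = k • cellMean x θ := by
  ext i
  simp only [cellMean, Pi.smul_apply, interval_average_eq, intervalIntegral.integral_smul,
    smul_comm k]

lemma ipGamma_smul_right (l : Fin N → ℝ) (c m : Fin N → ℂ) (k : ℂ) :
    ipGamma l c (k • m) = (starRingEnd ℂ) k * ipGamma l c m := by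
  simp only [ipGamma, Pi.smul_apply, smul_eq_mul, map_mul, Finset.mul_sum]
  exact Finset.sum_congr rfl fun i _ => by ring

namespace IsPeriodPartition

lemma sum_mul_integral_conj (hx : IsPeriodPartition L x) (c : Fin N → ℂ) (θ : ℝ → ℂ) :
    ∑ i, c i * ∫ s in (x i.castSucc)..(x i.succ), (starRingEnd ℂ) (θ s) =
      ipGamma (mesh x) c (cellMean x θ) := by
  refine Finset.sum_congr rfl fun i _ => ?_
  have hl : (mesh x i : ℂ) ≠ 0 := by exact_mod_cast (hx.mesh_pos i).ne'
  rw [intervalIntegral.intervalIntegral_conj, cellMean, interval_average_eq, ← mesh,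
    Complex.real_smul, map_mul, Complex.conj_ofReal, Complex.ofReal_inv]
  field_simp

lemma mem_Hm1Set_iff (hx : IsPeriodPartition L x) :
    r ∈ Hm1Set L x c ↔ ∃ θ θ' : ℝ → ℂ, IsPeriodicH1 L θ θ' ∧ h1NormSq L θ θ' ≤ 1 ∧
      r = ‖ipGamma (mesh x) c (cellMean x θ)‖ := by
  simp only [Hm1Set, Set.mem_ofPred_eq, hx.sum_mul_integral_conj, restrict_Ioo_eq_restrict_Ioc]
  constructor
  · rintro ⟨θ, θ', hper, hderiv, hθ, hθ', hnorm, hr⟩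
    exact ⟨θ, θ', ⟨hper, hderiv, hθ, hθ'⟩, hnorm, hr⟩
  · rintro ⟨θ, θ', ⟨hper, hderiv, hθ, hθ'⟩, hnorm, hr⟩
    exact ⟨θ, θ', hper, hderiv, hθ, hθ', hnorm, hr⟩

lemma sq_norm_ipGamma_cellMean_le (hx : IsPeriodPartition L x)
    (hnrm : nrm ∈ upperBounds (Hm1Set L x c)) (hθ : IsPeriodicH1 L θ θ') {B : ℝ} (hB : 0 < B)
    (hθB : h1NormSq L θ θ' ≤ B) :
    ‖ipGamma (mesh x) c (cellMean x θ)‖ ^ 2 ≤ nrm ^ 2 * B := by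
  set k : ℂ := ↑(√B)⁻¹ with hk
  have hk_sq : ‖k‖ ^ 2 = B⁻¹ := by
    rw [hk, Complex.norm_real, norm_inv, inv_pow, Real.norm_eq_abs, sq_abs, Real.sq_sqrt hB.le]
  have hunit : h1NormSq L (k • θ) (k • θ') ≤ 1 := by
    rwa [h1NormSq_const_smul, hk_sq, inv_mul_le_iff₀ hB, mul_one]
  have hle := hnrm (hx.mem_Hm1Set_iff.2 ⟨_, _, hθ.const_smul k, hunit, rfl⟩)
  have hle_sq := pow_le_pow_left₀ (norm_nonneg _) hle 2
  rwa [cellMean_const_smul, ipGamma_smul_right, norm_mul, RCLike.norm_conj, mul_pow, hk_sq,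
    inv_mul_le_iff₀ hB, mul_comm B] at hle_sq

variable [NeZero N]

lemma sq_le_of_mem_Hm1Set_Aop (hx : IsPeriodPartition L x)
    (hR : ∀ i, mesh x (i + 1) ≤ R * mesh x i) (hr : r ∈ Hm1Set L x (Aop (mesh x) d)) :
    r ^ 2 ≤ 2 * (R + 1) * discreteEnergy (mesh x) d := by
  obtain ⟨θ, θ', hθ, hunit, rfl⟩ := hx.mem_Hm1Set_iff.1 hr
  have hR₀ := hx.nonneg_of_mesh_succ_le hR
  have henergy : discreteEnergy (mesh x) (cellMean x θ) ≤ 2 * (R + 1) :=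
    (hx.discreteEnergy_cellMean_le hθ hR).trans (mul_le_of_le_one_right (by positivity) hunit)
  exact (sq_norm_ipGamma_Aop_left_le hx.mesh_pos d _).trans <|
    mul_le_mul_of_nonneg_right henergy (discreteEnergy_nonneg (fun i => (hx.mesh_pos i).le) d)

lemma sq_le_discreteEnergy_of_isLUB (hx : IsPeriodPartition L x)
    (hR : ∀ i, mesh x (i + 1) ≤ R * mesh x i) (hnrm : IsLUB (Hm1Set L x (Aop (mesh x) d)) nrm) :
    nrm ^ 2 ≤ 2 * (R + 1) * discreteEnergy (mesh x) d := by
  obtain ⟨r, hr⟩ := hnrm.nonempty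
  have hr₀ : 0 ≤ r := by
    obtain ⟨θ, θ', -, -, rfl⟩ := hx.mem_Hm1Set_iff.1 hr
    exact norm_nonneg _
  have hB := (sq_nonneg r).trans (hx.sq_le_of_mem_Hm1Set_Aop hR hr)
  exact (Real.le_sqrt (hr₀.trans (hnrm.1 hr)) hB).1 <|
    hnrm.2 fun _ hr => Real.le_sqrt_of_sq_le (hx.sq_le_of_mem_Hm1Set_Aop hR hr)

lemma discreteEnergy_le_of_mem_upperBounds (hx : IsPeriodPartition L x)
    (hnrm : nrm ∈ upperBounds (Hm1Set L x (Aop (mesh x) d))) :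
    discreteEnergy (mesh x) d ≤ (2 / 15 * L ^ 2 + 4) * nrm ^ 2 := by
  obtain hzero | hpos := (discreteEnergy_nonneg (fun i => (hx.mesh_pos i).le) d).eq_or_lt
  · rw [← hzero]
    positivity
  have hpair := hx.sq_norm_ipGamma_cellMean_le hnrm (hx.isPeriodicH1_h1Lift hx.pos d)
    (by positivity) (hx.h1NormSq_h1Lift_le hx.pos d)
  rw [hx.cellMean_h1Lift, ← conj_ipGamma, RCLike.norm_conj, ipGamma_Aop_right_self hx.mesh_pos,
    Complex.norm_real, Real.norm_eq_abs, sq_abs] at hpair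
  refine le_of_mul_le_mul_right ?_ hpos
  linarith

end IsPeriodPartition

end DualNorm

lemma le_div_mul_of_quasiUniform {ι : Type*} {l : ι → ℝ} {C₁ C₂ h : ℝ} (hC₁ : 0 < C₁)
    (hC₂ : 0 ≤ C₂) (hl : ∀ i, C₁ * h ≤ l i ∧ l i ≤ C₂ * h) (i j : ι) : l j ≤ C₂ / C₁ * l i :=
  calc l j ≤ C₂ / C₁ * (C₁ * h) := by
        rw [← mul_assoc, div_mul_cancel₀ _ hC₁.ne']
        exact (hl j).2
    _ ≤ C₂ / C₁ * l i := mul_le_mul_of_nonneg_left (hl i).1 (by positivity)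

theorem stmt_10_general {L R nrm : ℝ} {N : ℕ} [NeZero N] {x : Fin (N + 1) → ℝ} {c d : Fin N → ℂ}
    (hx : IsPeriodPartition L x) (hR : ∀ i, mesh x (i + 1) ≤ R * mesh x i)
    (hnrm : IsLUB (Hm1Set L x c) nrm) (hd : Aop (mesh x) d = c) :
    (((2 * (R + 1))⁻¹ * nrm ^ 2 : ℝ) : ℂ) ≤ ipGamma (mesh x) d c ∧
      ipGamma (mesh x) d c ≤ (((2 / 15 * L ^ 2 + 4) * nrm ^ 2 : ℝ) : ℂ) := by
  subst hd
  have hR₀ := hx.nonneg_of_mesh_succ_le hR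
  rw [ipGamma_Aop_right_self hx.mesh_pos, Complex.real_le_real, Complex.real_le_real,
    inv_mul_le_iff₀ (by positivity)]
  exact ⟨hx.sq_le_discreteEnergy_of_isLUB hR hnrm, hx.discreteEnergy_le_of_mem_upperBounds hnrm.1⟩

/-- There exist constants `c, C > 0` depending only on `L` and the
quasi-uniformity constants `C₁, C₂` (independent of `N` and `h`) such that for every
quasi-uniform partition of `Γ` and every piecewise constant `σ ∈ M` (values `cv`),
`c ‖σ‖²_{H^{−1}(Γ)} ≤ (A^{−1} σ, σ)_Γ ≤ C ‖σ‖²_{H^{−1}(Γ)}`, where `A^{−1}σ` is the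
(well-defined) element `d ∈ M` with `Ad = σ`, and `‖σ‖_{H^{−1}(Γ)}` is the least upper
bound `nrm` of `Hm1Set`. -/
theorem stmt_10 (L C₁ C₂ : ℝ) (hL : 0 < L) (hC₁ : 0 < C₁) (hC₂ : 0 < C₂) :
    ∃ c > 0, ∃ C > 0, ∀ (N : ℕ) [NeZero N], 2 ≤ N →
      ∀ (x : Fin (N + 1) → ℝ), StrictMono x → x 0 = 0 → x (Fin.last N) = L →
      ∀ h : ℝ, IsGreatest (Set.range fun i : Fin N => x i.succ - x i.castSucc) h →
      (∀ i : Fin N, C₁ * h ≤ x i.succ - x i.castSucc ∧ x i.succ - x i.castSucc ≤ C₂ * h) →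
      ∀ (cv : Fin N → ℂ) (nrm : ℝ), IsLUB (Hm1Set L x cv) nrm →
      ∀ d : Fin N → ℂ, Aop (fun i => x i.succ - x i.castSucc) d = cv →
        ((c * nrm ^ 2 : ℝ) : ℂ) ≤ ipGamma (fun i => x i.succ - x i.castSucc) d cv ∧
        ipGamma (fun i => x i.succ - x i.castSucc) d cv ≤ ((C * nrm ^ 2 : ℝ) : ℂ) := by
  refine ⟨(2 * (C₂ / C₁ + 1))⁻¹, by positivity, 2 / 15 * L ^ 2 + 4, by positivity, ?_⟩
  intro N _ _ x hx h₀ hlast h _ hquasi cv nrm hnrm d hd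
  exact stmt_10_general ⟨hx, h₀, hlast⟩
    (fun i => le_div_mul_of_quasiUniform hC₁ hC₂.le hquasi i (i + 1)) hnrm hd
end
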